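/- Let s, t be real numbers with -1/2 < s, t ≤ 1/2. Let (p_k) and (q_k) be sequences of odd primes such that q_k/p_k² → 0 and p_k/q_k² → 0 as k → ∞. For each k, let X_k be any Legendre array of size p_k × q_k. Then 1/F((X_k)_{s,t}) converges, as k → ∞, to [7/6 + 8(|s| - 1/4)²]·[7/6 + 8(|t| - 1/4)²] - 1. -/

import Mathlib

open scoped BigOperators

noncomputable section

/-- `A` is an array of size `n × m`: entries vanish outside `[0,n) × [0,m)`. -/
def IsArray (n m : ℤ) (A : ℤ × ℤ → ℝ) : Prop :=
  ∀ i j : ℤ, A (i, j) ≠ 0 → 0 ≤ i ∧ i < n ∧ 0 ≤ j ∧ j < m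

/-- `A` is a binary array of size `n × m`. -/
def IsBinaryArray (n m : ℤ) (A : ℤ × ℤ → ℝ) : Prop :=
  IsArray n m A ∧
    ∀ i j : ℤ, 0 ≤ i → i < n → 0 ≤ j → j < m → A (i, j) = 1 ∨ A (i, j) = -1

/-- Aperiodic autocorrelation of a two-dimensional array at displacement `(u, v)`. -/
def autocorr (A : ℤ × ℤ → ℝ) (u v : ℤ) : ℝ :=
  ∑ᶠ i : ℤ, ∑ᶠ j : ℤ, A (i, j) * A (i + u, j + v)

/-- Merit factor of an array of size `n × m`. -/
def meritFactor (n m : ℤ) (A : ℤ × ℤ → ℝ) : ℝ :=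
  ((n : ℝ) * m) ^ 2 / ∑ᶠ uv ∈ {x : ℤ × ℤ | x ≠ (0, 0)}, (autocorr A uv.1 uv.2) ^ 2

/-- `a` is a sequence of length `n`: entries vanish outside `[0,n)`. -/
def IsSeq (n : ℤ) (a : ℤ → ℝ) : Prop := ∀ i : ℤ, a i ≠ 0 → 0 ≤ i ∧ i < n

/-- `a` is a binary sequence of length `n`. -/
def IsBinarySeq (n : ℤ) (a : ℤ → ℝ) : Prop :=
  IsSeq n a ∧ ∀ i : ℤ, 0 ≤ i → i < n → a i = 1 ∨ a i = -1

/-- Aperiodic autocorrelation of a sequence at displacement `u`. -/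
def seqAutocorr (a : ℤ → ℝ) (u : ℤ) : ℝ := ∑ᶠ i : ℤ, a i * a (i + u)

/-- Merit factor of a sequence of length `n`. -/
def seqMeritFactor (n : ℤ) (a : ℤ → ℝ) : ℝ :=
  (n : ℝ) ^ 2 / ∑ᶠ u ∈ {u : ℤ | u ≠ 0}, (seqAutocorr a u) ^ 2

/-- Rotation of a sequence of length `n` by a real number `s`. -/
def seqRotate (n : ℤ) (s : ℝ) (a : ℤ → ℝ) : ℤ → ℝ :=
  fun i => if 0 ≤ i ∧ i < n then a ((i + ⌊(n : ℝ) * s⌋) % n) else 0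

/-- Rotation of an array of size `n × m` by real numbers `s` and `t`. -/
def arrRotate (n m : ℤ) (s t : ℝ) (A : ℤ × ℤ → ℝ) : ℤ × ℤ → ℝ :=
  fun x => if 0 ≤ x.1 ∧ x.1 < n ∧ 0 ≤ x.2 ∧ x.2 < m then
    A ((x.1 + ⌊(n : ℝ) * s⌋) % n, (x.2 + ⌊(m : ℝ) * t⌋) % m) else 0

/-- Generating function of an array of size `n × m`, evaluated at `(x, y)`. -/
def genFun (n m : ℕ) (A : ℤ × ℤ → ℝ) (x y : ℂ) : ℂ :=
  ∑ i ∈ Finset.range n, ∑ j ∈ Finset.range m, (A (i, j) : ℂ) * x ^ i * y ^ j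

/-- `zeta d = e^{iπ/d}`, a primitive `(2d)`-th root of unity. -/
def zeta (d : ℕ) : ℂ := Complex.exp (Real.pi * Complex.I / d)

/-- `eps p j = e^{2πij/p}`, a `p`-th root of unity. -/
def eps (p : ℕ) (j : ℤ) : ℂ := Complex.exp (2 * Real.pi * Complex.I * j / p)

/-- The Legendre sequence of length `p` (for `p` an odd prime). -/
def legendreSeq (p : ℕ) : ℤ → ℝ :=
  fun i => if 0 ≤ i ∧ i < p then (if i = 0 then 1 else (jacobiSym i p : ℝ)) else 0

/-- The ternary Legendre sequence of length `p` (for `p` an odd prime). -/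
def ternaryLegendreSeq (p : ℕ) : ℤ → ℝ :=
  fun i => if 0 ≤ i ∧ i < p then (jacobiSym i p : ℝ) else 0

/-- `X` is a Legendre array of size `p × q`: a binary array whose entry at `(i,j)`
is the product of Legendre symbols `(i|p)(j|q)` for `1 ≤ i < p` and `1 ≤ j < q`. -/
def IsLegendreArray (p q : ℕ) (X : ℤ × ℤ → ℝ) : Prop :=
  IsBinaryArray p q X ∧
    ∀ i j : ℤ, 1 ≤ i → i < p → 1 ≤ j → j < q →
      X (i, j) = (jacobiSym i p : ℝ) * (jacobiSym j q : ℝ)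

section CharacterSums

/-- Value at `x` of the quadratic polynomial with coefficient vector `v`. -/
def quadEval {F : Type*} [Field F] (v : F × F × F) (x : F) : F := v.1 * x ^ 2 + v.2.1 * x + v.2.2

theorem quadEval_injective {F : Type*} [Field F] {x y z : F} (hxy : x ≠ y) (hxz : x ≠ z) (hyz : y ≠ z) :
    Function.Injective fun v : F × F × F => (quadEval v x, quadEval v y, quadEval v z) := by
  rintro ⟨c, a, b⟩ ⟨c', a', b'⟩ h
  simp only [quadEval, Prod.mk.injEq] at h
  obtain ⟨h1, h2, h3⟩ := h
  have e1 : (x - y) * ((c - c') * (x + y) + (a - a')) = 0 := by linear_combination h1 - h2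
  have e2 : (x - z) * ((c - c') * (x + z) + (a - a')) = 0 := by linear_combination h1 - h3
  have e1 := (mul_eq_zero.mp e1).resolve_left (sub_ne_zero.mpr hxy)
  have e2 := (mul_eq_zero.mp e2).resolve_left (sub_ne_zero.mpr hxz)
  have e3 : (y - z) * (c - c') = 0 := by linear_combination e1 - e2
  have e3 := (mul_eq_zero.mp e3).resolve_left (sub_ne_zero.mpr hyz)
  have hc : c = c' := sub_eq_zero.mp e3
  subst hc
  have ha : a = a' := by linear_combination e1
  subst ha
  have hb : b = b' := by linear_combination h1
  rw [hb]

theorem sum_quadEval {F : Type*} [Field F] [Fintype F] {x y z : F} (hxy : x ≠ y) (hxz : x ≠ z) (hyz : y ≠ z)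
    (g : F → F → F → ℤ) :
    ∑ v : F × F × F, g (quadEval v x) (quadEval v y) (quadEval v z) =
      ∑ w : F × F × F, g w.1 w.2.1 w.2.2 :=
  Function.Bijective.sum_comp
    (Finite.injective_iff_bijective.mp (quadEval_injective hxy hxz hyz))
    (fun w : F × F × F => g w.1 w.2.1 w.2.2)

variable {F : Type*} [Field F] [Fintype F] [DecidableEq F]

theorem abs_quadraticChar_le_one (a : F) : |quadraticChar F a| ≤ 1 := by
  rcases quadraticChar_isQuadratic F a with h | h | h <;> simp [h]

theorem sum_quadraticChar_mul_add (hF : ringChar F ≠ 2) (c : F) :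
    ∑ x, quadraticChar F x * quadraticChar F (x + c) =
      (if c = 0 then (Fintype.card F : ℤ) else 0) - 1 := by
  split_ifs with hc
  · subst hc
    have h : ∀ x : F, quadraticChar F x * quadraticChar F (x + 0) = 1 - if x = 0 then 1 else 0 := by
      intro x
      rcases eq_or_ne x 0 with rfl | hx
      · simp
      · rw [add_zero, ← sq, quadraticChar_sq_one hx]; simp [hx]
    simp only [h, Finset.sum_sub_distrib]; simp
  · have hJ := jacobiSum_nontrivial_inv (quadraticChar_ne_one hF)
    rw [(quadraticChar_isQuadratic F).inv, jacobiSum] at hJ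
    have hc' : (-c : F) ≠ 0 := neg_ne_zero.mpr hc
    rw [← Equiv.sum_comp (Equiv.mulLeft₀ (-c) hc')]
    have h : ∀ x : F, quadraticChar F ((-c) * x) * quadraticChar F ((-c) * x + c) =
        quadraticChar F (-1) * (quadraticChar F x * quadraticChar F (1 - x)) := by
      intro x
      have e1 : (-c) * x + c = c * (1 - x) := by ring
      have e2 : (-c) * x = (-1) * (c * x) := by ring
      rw [e1, e2]
      simp only [map_mul]
      have := quadraticChar_sq_one hc
      linear_combination (quadraticChar F (-1) * quadraticChar F x * quadraticChar F (1 - x)) * this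
    simp only [Equiv.mulLeft₀_apply, h, ← Finset.mul_sum, hJ]
    have := quadraticChar_sq_one (neg_ne_zero.mpr (one_ne_zero (α := F)))
    linear_combination -this

/-- The product of the character at the values of a quadratic at four points, summed over all
quadratics. -/
def quadFourSum (x y z w : F) : ℤ :=
  ∑ v : F × F × F, quadraticChar F (quadEval v x) * quadraticChar F (quadEval v y) *
    quadraticChar F (quadEval v z) * quadraticChar F (quadEval v w)

theorem quadFourSum_le (x y z w : F) : |quadFourSum x y z w| ≤ (Fintype.card F : ℤ) ^ 3 := by
  unfold quadFourSum
  refine (Finset.abs_sum_le_sum_abs _ _).trans ?_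
  have : ∀ v ∈ (Finset.univ : Finset (F × F × F)),
      |quadraticChar F (quadEval v x) * quadraticChar F (quadEval v y) *
      quadraticChar F (quadEval v z) * quadraticChar F (quadEval v w)| ≤ 1 := by
    intro v _
    simp only [abs_mul]
    have h := fun u => abs_quadraticChar_le_one (quadEval v u)
    exact mul_le_one₀ (mul_le_one₀ (mul_le_one₀ (h x) (abs_nonneg _) (h y)) (abs_nonneg _) (h z))
      (abs_nonneg _) (h w)
  refine (Finset.sum_le_sum this).trans (le_of_eq ?_)
  simp
  ring

/-- The sum vanishes as soon as one argument is isolated and the other three are not distinct. -/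
theorem quadFourSum_eq_zero (hF : ringChar F ≠ 2) {x y w : F} (hxw : x ≠ w) (hyw : y ≠ w) :
    quadFourSum x x y w = 0 := by
  have key : ∀ u, x ≠ u → u ≠ w → ∀ g : F → F → ℤ,
      ∑ v : F × F × F, g (quadEval v x) (quadEval v u) * quadraticChar F (quadEval v w) = 0 := by
    intro u hxu huw g
    rw [sum_quadEval hxu hxw huw (fun a b c => g a b * quadraticChar F c)]
    simp only [Fintype.sum_prod_type, ← Finset.mul_sum, quadraticChar_sum_zero hF]; simp
  rcases eq_or_ne x y with rfl | hxy
  · obtain ⟨u, hu⟩ : ∃ u : F, u ∉ ({x, w} : Finset F) := by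
      by_contra! h
      have h2 := Finset.card_le_two (a := x) (b := w)
      have : ({x, w} : Finset F) = Finset.univ := Finset.eq_univ_iff_forall.mpr h
      rw [this, Finset.card_univ] at h2
      have h3 := FiniteField.odd_card_of_char_ne_two hF
      have h4 := Fintype.one_lt_card (α := F)
      omega
    simp only [Finset.mem_insert, Finset.mem_singleton, not_or] at hu
    exact key u (Ne.symm hu.1) hu.2
      fun a _ => quadraticChar F a * quadraticChar F a * quadraticChar F a
  · exact key y hxy hyw fun a b => quadraticChar F a * quadraticChar F a * quadraticChar F b

theorem sum_quadraticChar_plane (hF : ringChar F ≠ 2) :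
    ∑ w : F × F × F, quadraticChar F w.1 * quadraticChar F w.2.1 * quadraticChar F w.2.2 *
      quadraticChar F (w.1 + w.2.1 + w.2.2) =
    quadraticChar F (-1) * (Fintype.card F * (Fintype.card F - 1)) := by
  have h0 := quadraticChar_sum_zero hF
  simp only [Fintype.sum_prod_type]
  have h1 : ∀ a b : F, ∑ c, quadraticChar F a * quadraticChar F b * quadraticChar F c *
      quadraticChar F (a + b + c) =
      Fintype.card F * (if b = -a then quadraticChar F a * quadraticChar F b else 0)
        - quadraticChar F a * quadraticChar F b := by
    intro a b
    have := sum_quadraticChar_mul_add hF (a + b)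
    have hab : a + b = 0 ↔ b = -a := by rw [add_comm]; exact add_eq_zero_iff_eq_neg
    simp only [hab] at this
    calc _ = quadraticChar F a * quadraticChar F b *
          ∑ c, quadraticChar F c * quadraticChar F (c + (a + b)) := by
            rw [Finset.mul_sum]
            refine Finset.sum_congr rfl fun c _ => ?_
            rw [add_comm c]; ring
      _ = _ := by rw [this]; split_ifs <;> ring
  have h2 : ∀ a : F, quadraticChar F a * quadraticChar F (-a) =
      quadraticChar F (-1) * (1 - if a = 0 then 1 else 0) := by
    intro a
    rcases eq_or_ne a 0 with rfl | ha
    · simp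
    · rw [neg_eq_neg_one_mul, map_mul]
      have := quadraticChar_sq_one ha
      simp only [ha, if_false]
      linear_combination quadraticChar F (-1) * this
  simp only [h1, Finset.sum_sub_distrib, ← Finset.mul_sum, h0, Finset.sum_ite_eq',
    Finset.mem_univ, if_true, h2]
  simp
  ring

theorem quadFourSum_of_distinct (hF : ringChar F ≠ 2) {x y z w : F} (hxy : x ≠ y) (hxz : x ≠ z)
    (hyz : y ≠ z) (hxw : x ≠ w) (hyw : y ≠ w) (hzw : z ≠ w) :
    quadFourSum x y z w = Fintype.card F * (Fintype.card F - 1) := by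
  have dxy := sub_ne_zero.mpr hxy
  have dxz := sub_ne_zero.mpr hxz
  have dyz := sub_ne_zero.mpr hyz
  have dxw := sub_ne_zero.mpr hxw
  have dyw := sub_ne_zero.mpr hyw
  have dzw := sub_ne_zero.mpr hzw
  have dyx := sub_ne_zero.mpr hxy.symm
  have dzx := sub_ne_zero.mpr hxz.symm
  have dzy := sub_ne_zero.mpr hyz.symm
  set α := (y - w) * (z - w) / ((x - y) * (x - z)) with hα
  set β := (x - w) * (z - w) / ((y - x) * (y - z)) with hβ
  set γ := (x - w) * (y - w) / ((z - x) * (z - y)) with hγ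
  have hα0 : α ≠ 0 := by rw [hα]; positivity
  have hβ0 : β ≠ 0 := by rw [hβ]; positivity
  have hγ0 : γ ≠ 0 := by rw [hγ]; positivity
  have hw : ∀ v : F × F × F,
      quadEval v w = α * quadEval v x + β * quadEval v y + γ * quadEval v z := by
    intro v
    simp only [quadEval, hα, hβ, hγ]
    have e1 : y - x = -(x - y) := by ring
    have e2 : z - x = -(x - z) := by ring
    have e3 : z - y = -(y - z) := by ring
    rw [e1, e2, e3]
    field_simp
    ring
  have hprod : quadraticChar F α * quadraticChar F β * quadraticChar F γ = quadraticChar F (-1) := by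
    rw [← map_mul, ← map_mul]
    have : α * β * γ = (-1) * ((x - w) * (y - w) * (z - w) / ((x - y) * (x - z) * (y - z))) ^ 2 := by
      simp only [hα, hβ, hγ]
      have e1 : y - x = -(x - y) := by ring
      have e2 : z - x = -(x - z) := by ring
      have e3 : z - y = -(y - z) := by ring
      rw [e1, e2, e3]
      field_simp
    rw [this, map_mul, quadraticChar_sq_one']
    · simp
    · positivity
  unfold quadFourSum
  simp only [hw]
  rw [sum_quadEval hxy hxz hyz (fun a b c => quadraticChar F a * quadraticChar F b *
    quadraticChar F c * quadraticChar F (α * a + β * b + γ * c))]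
  have h1 := sum_quadraticChar_plane hF
  rw [← ((Equiv.mulLeft₀ α hα0).prodCongr
    ((Equiv.mulLeft₀ β hβ0).prodCongr (Equiv.mulLeft₀ γ hγ0))).sum_comp] at h1
  simp only [Equiv.prodCongr_apply, Prod.map_fst, Prod.map_snd, Equiv.mulLeft₀_apply, map_mul] at h1
  have hm := quadraticChar_sq_one (neg_ne_zero.mpr (one_ne_zero (α := F)))
  have h2 : ∀ w : F × F × F, quadraticChar F α * quadraticChar F w.1 *
      (quadraticChar F β * quadraticChar F w.2.1) * (quadraticChar F γ * quadraticChar F w.2.2) *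
      quadraticChar F (α * w.1 + β * w.2.1 + γ * w.2.2) = quadraticChar F (-1) *
      (quadraticChar F w.1 * quadraticChar F w.2.1 * quadraticChar F w.2.2 *
      quadraticChar F (α * w.1 + β * w.2.1 + γ * w.2.2)) := by
    intro w
    rw [← hprod]; ring
  simp only [h2, ← Finset.mul_sum] at h1
  exact mul_left_cancel₀ (pow_ne_zero_iff two_ne_zero |>.mp (hm ▸ one_ne_zero)) h1

/-- The quadratic character sum of `x` times a quadratic polynomial. -/
def cubicSum (v : F × F × F) : ℤ := ∑ x, quadraticChar F x * quadraticChar F (quadEval v x)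

theorem sum_fourth_pow_cubicSum (hF : ringChar F ≠ 2) :
    ∑ v : F × F × F, cubicSum v ^ 4 ≤ 9 * (Fintype.card F : ℤ) ^ 5 := by
  set n : ℤ := ((Fintype.card F : ℕ) : ℤ) with hn
  have hn0 : 0 ≤ n := by positivity
  let χ₄ : F → F → F → F → ℤ := fun x y z w =>
    quadraticChar F x * quadraticChar F y * quadraticChar F z * quadraticChar F w
  let I : F → F → ℤ := fun a b => if a = b then 1 else 0
  have hI : ∀ a b, 0 ≤ I a b := fun a b => by simp only [I]; split_ifs <;> simp
  let P : F → F → F → F → ℤ := fun x y z w => I x y * I z w + I x z * I y w + I x w * I y z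
  let N : F → F → F → F → ℤ := fun x y z w =>
    I x y + I x z + I x w + I y z + I y w + I z w
  have expand : ∑ v : F × F × F, cubicSum v ^ 4 =
      ∑ x, ∑ y, ∑ z, ∑ w, χ₄ x y z w * quadFourSum x y z w := by
    have h : ∀ v : F × F × F, cubicSum v ^ 4 = ∑ x, ∑ y, ∑ z, ∑ w, χ₄ x y z w *
        (quadraticChar F (quadEval v x) * quadraticChar F (quadEval v y) *
          quadraticChar F (quadEval v z) * quadraticChar F (quadEval v w)) := by
      intro v
      have : ∀ S : ℤ, S ^ 4 = S * (S * (S * S)) := fun S => by ring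
      rw [this]
      unfold cubicSum
      simp only [Finset.sum_mul_sum]
      simp only [Finset.mul_sum, χ₄]
      refine Finset.sum_congr rfl fun x _ => Finset.sum_congr rfl fun y _ =>
        Finset.sum_congr rfl fun z _ => Finset.sum_congr rfl fun w _ => by ring
    simp only [h]
    rw [Finset.sum_comm]
    refine Finset.sum_congr rfl fun x _ => ?_
    rw [Finset.sum_comm]
    refine Finset.sum_congr rfl fun y _ => ?_
    rw [Finset.sum_comm]
    refine Finset.sum_congr rfl fun z _ => ?_
    rw [Finset.sum_comm]
    refine Finset.sum_congr rfl fun w _ => ?_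
    rw [← Finset.mul_sum, quadFourSum]
  have hzero : ∑ x, ∑ y, ∑ z, ∑ w, χ₄ x y z w = 0 := by
    simp only [χ₄, ← Finset.mul_sum, quadraticChar_sum_zero hF]
    simp
  have hχ : ∀ x y z w, |χ₄ x y z w| ≤ 1 := by
    intro x y z w
    simp only [χ₄, abs_mul]
    have h := abs_quadraticChar_le_one (F := F)
    exact mul_le_one₀ (mul_le_one₀ (mul_le_one₀ (h x) (abs_nonneg _) (h y)) (abs_nonneg _) (h z))
      (abs_nonneg _) (h w)
  have hU : ∀ x y z w : F,
      |quadFourSum x y z w - n * (n - 1)| ≤ n ^ 3 * P x y z w + n ^ 2 * N x y z w := by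
    intro x y z w
    have hn1 : 1 ≤ n := by
      have := Fintype.card_pos (α := F)
      omega
    have hP0 : 0 ≤ P x y z w := by
      simp only [P]
      have h1 := mul_nonneg (hI x y) (hI z w)
      have h2 := mul_nonneg (hI x z) (hI y w)
      have h3 := mul_nonneg (hI x w) (hI y z)
      linarith
    have hN0 : 0 ≤ N x y z w := by
      simp only [N]
      linarith [hI x y, hI x z, hI x w, hI y z, hI y w, hI z w]
    by_cases hd : x ≠ y ∧ x ≠ z ∧ y ≠ z ∧ x ≠ w ∧ y ≠ w ∧ z ≠ w
    · rw [quadFourSum_of_distinct hF hd.1 hd.2.1 hd.2.2.1 hd.2.2.2.1 hd.2.2.2.2.1 hd.2.2.2.2.2]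
      simp only [hn, sub_self, abs_zero]
      positivity
    have hN1 : 1 ≤ N x y z w := by
      have h1 : ∀ {a b : F}, a = b → I a b = 1 := fun h => if_pos h
      simp only [N]
      by_contra hlt
      refine hd ⟨?_, ?_, ?_, ?_, ?_, ?_⟩ <;> intro h <;>
        linarith [h1 h, hI x y, hI x z, hI x w, hI y z, hI y w, hI z w]
    by_cases hp : (x = y ∧ z = w) ∨ (x = z ∧ y = w) ∨ (x = w ∧ y = z)
    · have hP1 : 1 ≤ P x y z w := by
        have h1 := mul_nonneg (hI x y) (hI z w)
        have h2 := mul_nonneg (hI x z) (hI y w)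
        have h3 := mul_nonneg (hI x w) (hI y z)
        have h4 : ∀ {a b : F}, a = b → I a b = 1 := fun h => if_pos h
        simp only [P]
        rcases hp with h | h | h
        · rw [h4 h.1, h4 h.2]; linarith
        · rw [h4 h.1, h4 h.2]; linarith
        · rw [h4 h.1, h4 h.2]; linarith
      have hq := abs_le.mp (quadFourSum_le x y z w)
      rw [← hn] at hq
      rw [abs_le]
      constructor <;> nlinarith [pow_nonneg hn0 3, pow_nonneg hn0 2]
    · have hq : quadFourSum x y z w = 0 := by
        have perm : ∀ a b c d a' b' c' d' : F,
            (∀ f : F → ℤ, f a' * f b' * f c' * f d' = f a * f b * f c * f d) →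
            quadFourSum a b c d = quadFourSum a' b' c' d' := by
          intro a b c d a' b' c' d' h
          unfold quadFourSum
          exact Finset.sum_congr rfl fun v _ => (h fun u => quadraticChar F (quadEval v u)).symm
        have pair : ∀ a c d : F, c ≠ d → quadFourSum a a c d = 0 := by
          intro a c d hcd
          rcases eq_or_ne a d with rfl | had
          · rw [perm a a c a a a a c fun f => by ring]
            exact quadFourSum_eq_zero hF hcd.symm hcd.symm
          · exact quadFourSum_eq_zero hF had hcd
        push Not at hp
        obtain ⟨p1, p2, p3⟩ := hp
        by_cases h : x = y
        · subst h; exact pair x z w (p1 rfl)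
        by_cases h : x = z
        · subst h
          rw [perm x y x w x x y w fun f => by ring]
          exact pair x y w (p2 rfl)
        by_cases h : x = w
        · subst h
          rw [perm x y z x x x y z fun f => by ring]
          exact pair x y z (p3 rfl)
        by_cases h : y = z
        · subst h
          rw [perm x y y w y y x w fun f => by ring]
          exact pair y x w (by tauto)
        by_cases h : y = w
        · subst h
          rw [perm x y z y y y x z fun f => by ring]
          exact pair y x z (by tauto)
        by_cases h : z = w
        · subst h
          rw [perm x y z z z z x y fun f => by ring]
          exact pair z x y (by tauto)
        tauto
      rw [hq, abs_le]
      constructor <;> nlinarith [pow_nonneg hn0 3, pow_nonneg hn0 2]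
  have hPsum : ∑ x, ∑ y, ∑ z, ∑ w, P x y z w = 3 * n ^ 2 := by
    simp [P, I, Finset.sum_add_distrib, hn]
    ring
  have hNsum : ∑ x, ∑ y, ∑ z, ∑ w, N x y z w = 6 * n ^ 3 := by
    simp [N, I, Finset.sum_add_distrib, ← Finset.mul_sum, hn]
    ring
  calc ∑ v : F × F × F, cubicSum v ^ 4
      = ∑ x, ∑ y, ∑ z, ∑ w, χ₄ x y z w * (quadFourSum x y z w - n * (n - 1)) := by
        simp only [mul_sub, Finset.sum_sub_distrib, ← Finset.sum_mul, hzero, expand]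
        ring
    _ ≤ ∑ x, ∑ y, ∑ z, ∑ w, (n ^ 3 * P x y z w + n ^ 2 * N x y z w) := by
        refine Finset.sum_le_sum fun x _ => Finset.sum_le_sum fun y _ =>
          Finset.sum_le_sum fun z _ => Finset.sum_le_sum fun w _ => ?_
        refine (le_abs_self _).trans ?_
        rw [abs_mul]
        refine (mul_le_of_le_one_left (abs_nonneg _) (hχ x y z w)).trans (hU x y z w)
    _ = 9 * n ^ 5 := by
        simp only [Finset.sum_add_distrib, ← Finset.mul_sum, hPsum, hNsum]
        ring

theorem cubicSum_scale {μ t : F} (ht : t ≠ 0) (a b : F) :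
    cubicSum (μ * t ^ 2, μ * a * t, μ * b) =
      quadraticChar F μ * quadraticChar F t * cubicSum (1, a, b) := by
  unfold cubicSum
  rw [← Equiv.sum_comp (Equiv.mulLeft₀ t ht)
    (fun x => quadraticChar F x * quadraticChar F (quadEval (1, a, b) x)), Finset.mul_sum]
  refine Finset.sum_congr rfl fun x _ => ?_
  have e : quadEval (μ * t ^ 2, μ * a * t, μ * b) x = μ * quadEval (1, a, b) (t * x) := by
    simp only [quadEval]; ring
  simp only [Equiv.mulLeft₀_apply, e, map_mul]
  have := quadraticChar_sq_one ht
  linear_combination (-quadraticChar F μ * quadraticChar F x *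
    quadraticChar F (quadEval (1, a, b) (t * x))) * this

/-- A `3/4`-power bound for the character sum of a cubic with a simple root at zero. -/
theorem cubicSum_pow_four_le (hF : ringChar F ≠ 2) (a : F) {b : F} (hb : b ≠ 0) :
    cubicSum (1, a, b) ^ 4 ≤ 81 * (Fintype.card F : ℤ) ^ 3 := by
  set S := cubicSum (1, a, b)
  let φ : Fˣ × Fˣ → F × F × F := fun u =>
    ((u.1 : F) * (u.2 : F) ^ 2, (u.1 : F) * a * u.2, (u.1 : F) * b)
  have hφ : ∀ u, cubicSum (φ u) ^ 4 = S ^ 4 := by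
    intro u
    simp only [φ, cubicSum_scale u.2.ne_zero, mul_pow]
    have h1 := quadraticChar_sq_one u.1.ne_zero
    have h2 := quadraticChar_sq_one u.2.ne_zero
    have e : ∀ m : ℤ, m ^ 4 = (m ^ 2) ^ 2 := fun m => by ring
    rw [e (quadraticChar F u.1), e (quadraticChar F u.2), h1, h2]
    ring
  have hcard := Finset.card_le_mul_card_image (f := φ) Finset.univ 2 (by
    intro w hw
    obtain ⟨u, -, rfl⟩ := Finset.mem_image.mp hw
    refine (Finset.card_le_card (t := {u, (u.1, -u.2)}) ?_).trans Finset.card_le_two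
    intro u' hu'
    simp only [Finset.mem_filter, Finset.mem_univ, true_and, φ, Prod.mk.injEq] at hu'
    obtain ⟨h1, -, h3⟩ := hu'
    have e1 : u'.1 = u.1 := Units.ext (mul_right_cancel₀ hb h3)
    rw [e1] at h1
    have e2 : (u'.2 : F) ^ 2 = (u.2 : F) ^ 2 := mul_left_cancel₀ u.1.ne_zero h1
    rcases sq_eq_sq_iff_eq_or_eq_neg.mp e2 with h | h
    · have : u' = u := Prod.ext e1 (Units.ext h)
      simp [this]
    · have : u' = (u.1, -u.2) := Prod.ext e1 (Units.ext (by simpa using h))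
      simp [this])
  have hsum : ((Finset.univ.image φ).card : ℤ) * S ^ 4 ≤ ∑ v : F × F × F, cubicSum v ^ 4 := by
    calc ((Finset.univ.image φ).card : ℤ) * S ^ 4 = ∑ v ∈ Finset.univ.image φ, cubicSum v ^ 4 := by
          rw [Finset.sum_congr rfl (g := fun _ => S ^ 4)]
          · simp
          · intro v hv
            obtain ⟨u, -, rfl⟩ := Finset.mem_image.mp hv
            exact hφ u
      _ ≤ _ := Finset.sum_le_sum_of_subset_of_nonneg (Finset.subset_univ _)
          fun v _ _ => by positivity
  have h9 := sum_fourth_pow_cubicSum hF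
  rw [Finset.card_univ, Fintype.card_prod, Fintype.card_units] at hcard
  have hn : 3 ≤ Fintype.card F := by
    have h3 := FiniteField.odd_card_of_char_ne_two hF
    have h4 := Fintype.one_lt_card (α := F)
    omega
  obtain ⟨m, hm⟩ : ∃ m, Fintype.card F = m + 1 := ⟨Fintype.card F - 1, by omega⟩
  rw [hm] at hcard h9 hn ⊢
  rw [Nat.add_sub_cancel] at hcard
  push_cast at h9 ⊢
  have hm2 : (2 : ℤ) ≤ m := by omega
  have hcard' : (m : ℤ) * m ≤ 2 * ((Finset.univ.image φ).card : ℤ) := by exact_mod_cast hcard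
  set c : ℤ := ((Finset.univ.image φ).card : ℤ)
  have hS : 0 ≤ S ^ 4 := by positivity
  have h1 : (m : ℤ) * m * S ^ 4 ≤ 18 * (m + 1) ^ 5 := by nlinarith
  have h2 : (2 * ((m : ℤ) + 1)) ^ 2 ≤ 9 * (m * m) := by nlinarith
  have h3 : 4 * ((m : ℤ) + 1) ^ 2 * S ^ 4 ≤ 4 * ((m : ℤ) + 1) ^ 2 * (81 * (m + 1) ^ 3) := by
    have : (0 : ℤ) ≤ (m + 1) ^ 5 := by positivity
    nlinarith
  exact le_of_mul_le_mul_left h3 (by positivity)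


/-- The complete sum of a product of four shifted quadratic characters. -/
def shiftFourSum (a b c d : F) : ℤ :=
  ∑ j, quadraticChar F (j + a) * quadraticChar F (j + b) * quadraticChar F (j + c) *
    quadraticChar F (j + d)

theorem shiftFourSum_perm {a b c d a' b' c' d' : F}
    (h : ∀ f : F → ℤ, f a' * f b' * f c' * f d' = f a * f b * f c * f d) :
    shiftFourSum a b c d = shiftFourSum a' b' c' d' :=
  Finset.sum_congr rfl fun j _ => (h fun u => quadraticChar F (j + u)).symm

theorem shiftFourSum_of_distinct {a b c d : F} (hab : a ≠ b) (hac : a ≠ c) (had : a ≠ d)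
    (hbd : b ≠ d) (hcd : c ≠ d) :
    ∃ e f : F, f ≠ 0 ∧ |shiftFourSum a b c d + 1| ≤ |cubicSum (1, e, f)| := by
  have ha : a - d ≠ 0 := sub_ne_zero.mpr had
  have hb : b - d ≠ 0 := sub_ne_zero.mpr hbd
  have hc : c - d ≠ 0 := sub_ne_zero.mpr hcd
  set A := a - d with hA
  set B := b - d with hB
  set C := c - d with hC
  have hAB : A ≠ B := fun h => hab (by linear_combination h)
  have hAC : A ≠ C := fun h => hac (by linear_combination h)
  have e1 : shiftFourSum a b c d = ∑ j, quadraticChar F (j + A) * quadraticChar F (j + B) *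
      quadraticChar F (j + C) * quadraticChar F j := by
    rw [shiftFourSum, ← Equiv.sum_comp (Equiv.subRight d)]
    refine Finset.sum_congr rfl fun j _ => ?_
    have hs : ∀ u : F, j - d + u = j + (u - d) := fun u => by ring
    simp only [Equiv.subRight_apply, hA, hB, hC, hs, sub_self, add_zero]
  have e2 : shiftFourSum a b c d + 1 = ∑ j, quadraticChar F (1 + A * j) *
      quadraticChar F (1 + B * j) * quadraticChar F (1 + C * j) := by
    have h1 : (1 : ℤ) = ∑ j : F, if j = 0 then 1 else 0 := by simp
    rw [e1, ← Equiv.sum_comp (Equiv.inv F), h1, ← Finset.sum_add_distrib]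
    refine Finset.sum_congr rfl fun j _ => ?_
    rcases eq_or_ne j 0 with rfl | hj
    · simp only [Equiv.inv_apply, inv_zero, MulChar.map_zero, mul_zero, add_zero, map_one]
      simp
    · have hs : ∀ u : F, 1 + u * j = j * (j⁻¹ + u) := fun u => by field_simp
      have hi : quadraticChar F j⁻¹ = quadraticChar F j := by
        have h2 := quadraticChar_sq_one hj
        have h3 : quadraticChar F j * quadraticChar F j⁻¹ = 1 := by
          rw [← map_mul, mul_inv_cancel₀ hj, map_one]
        linear_combination (quadraticChar F j) * h3 - (quadraticChar F j⁻¹) * h2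
      have h2 := quadraticChar_sq_one hj
      simp only [Equiv.inv_apply, hs, map_mul, hi, hj, if_false]
      linear_combination (-quadraticChar F (j⁻¹ + A) * quadraticChar F (j⁻¹ + B) *
        quadraticChar F (j⁻¹ + C) * quadraticChar F j) * h2
  refine ⟨(A / B - 1) + (A / C - 1), (A / B - 1) * (A / C - 1), ?_, ?_⟩
  · refine mul_ne_zero ?_ ?_
    · rw [sub_ne_zero, Ne, div_eq_one_iff_eq hb]; exact hAB
    · rw [sub_ne_zero, Ne, div_eq_one_iff_eq hc]; exact hAC
  · have e3 : shiftFourSum a b c d + 1 = quadraticChar F (B / A) * quadraticChar F (C / A) *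
        cubicSum (1, (A / B - 1) + (A / C - 1), (A / B - 1) * (A / C - 1)) := by
      rw [e2, cubicSum, Finset.mul_sum,
        ← Equiv.sum_comp ((Equiv.subRight (1 : F)).trans (Equiv.mulLeft₀ A⁻¹ (inv_ne_zero ha)))]
      refine Finset.sum_congr rfl fun x _ => ?_
      simp only [Equiv.trans_apply, Equiv.subRight_apply, Equiv.mulLeft₀_apply]
      have f1 : 1 + A * (A⁻¹ * (x - 1)) = x := by field_simp; ring
      have f2 : 1 + B * (A⁻¹ * (x - 1)) = B / A * (x + (A / B - 1)) := by field_simp; ring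
      have f3 : 1 + C * (A⁻¹ * (x - 1)) = C / A * (x + (A / C - 1)) := by field_simp; ring
      have f4 : quadEval (1, (A / B - 1) + (A / C - 1), (A / B - 1) * (A / C - 1)) x =
          (x + (A / B - 1)) * (x + (A / C - 1)) := by simp only [quadEval]; ring
      rw [f1, f2, f3, f4]
      simp only [map_mul]
      ring
    rw [e3, abs_mul, abs_mul]
    have h := abs_quadraticChar_le_one (F := F)
    exact mul_le_of_le_one_left (abs_nonneg _) (mul_le_one₀ (h _) (abs_nonneg _) (h _))

theorem shiftFourSum_pair (hF : ringChar F ≠ 2) {a c d : F} (hcd : c ≠ d) :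
    |shiftFourSum a a c d| ≤ 2 := by
  have h0 : ∑ j, quadraticChar F (j + c) * quadraticChar F (j + d) = -1 := by
    have := sum_quadraticChar_mul_add hF (d - c)
    rw [if_neg (sub_ne_zero.mpr hcd.symm), ← Equiv.sum_comp (Equiv.addRight c)] at this
    simpa [add_assoc, -quadraticChar_apply] using this
  have h1 : shiftFourSum a a c d =
      -1 - quadraticChar F (-a + c) * quadraticChar F (-a + d) := by
    have h2 : ∀ j, quadraticChar F (j + a) * quadraticChar F (j + a) * quadraticChar F (j + c) *
        quadraticChar F (j + d) = quadraticChar F (j + c) * quadraticChar F (j + d) -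
        if j = -a then quadraticChar F (j + c) * quadraticChar F (j + d) else 0 := by
      intro j
      split_ifs with h
      · simp [h]
      · have := quadraticChar_sq_one (a := j + a) (fun h' => h (eq_neg_of_add_eq_zero_left h'))
        linear_combination (quadraticChar F (j + c) * quadraticChar F (j + d)) * this
    simp only [shiftFourSum, h2, Finset.sum_sub_distrib, h0]
    simp
  have h := abs_quadraticChar_le_one (F := F)
  have h3 : |quadraticChar F (-a + c) * quadraticChar F (-a + d)| ≤ 1 := by
    rw [abs_mul]; exact mul_le_one₀ (h _) (abs_nonneg _) (h _)
  rw [h1]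
  rw [abs_le] at h3 ⊢
  constructor <;> linarith [h3.1, h3.2]

theorem shiftFourSum_two_pairs (a c : F) :
    |shiftFourSum a a c c - Fintype.card F| ≤ 2 := by
  have h2 : ∀ j, |quadraticChar F (j + a) * quadraticChar F (j + a) * quadraticChar F (j + c) *
      quadraticChar F (j + c) - 1| ≤ (if j = -a then 1 else 0) + if j = -c then 1 else 0 := by
    intro j
    by_cases ha : j = -a
    · simp only [ha, neg_add_cancel, MulChar.map_zero, if_true]
      split_ifs <;> simp
    by_cases hc : j = -c
    · simp only [hc, neg_add_cancel, MulChar.map_zero, if_true]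
      split_ifs <;> simp
    have h1 := quadraticChar_sq_one (a := j + a) (fun h' => ha (eq_neg_of_add_eq_zero_left h'))
    have h2 := quadraticChar_sq_one (a := j + c) (fun h' => hc (eq_neg_of_add_eq_zero_left h'))
    have h3 : quadraticChar F (j + a) * quadraticChar F (j + a) * quadraticChar F (j + c) *
      quadraticChar F (j + c) - 1 = 0 := by
      linear_combination (quadraticChar F (j + c)) ^ 2 * h1 + h2
    rw [h3]
    simp [ha, hc]
  have h4 : shiftFourSum a a c c - Fintype.card F = ∑ j, (quadraticChar F (j + a) *
      quadraticChar F (j + a) * quadraticChar F (j + c) * quadraticChar F (j + c) - 1) := by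
    simp only [shiftFourSum, Finset.sum_sub_distrib]
    simp
  rw [h4]
  refine (Finset.abs_sum_le_sum_abs _ _).trans ((Finset.sum_le_sum fun j _ => h2 j).trans ?_)
  simp [Finset.sum_add_distrib]

/-- The product of four shifted characters is close to its expected value: the field
cardinality when the shifts pair up and zero otherwise. -/
theorem abs_shiftFourSum_sub_le (hF : ringChar F ≠ 2) (a b c d : F) :
    |(shiftFourSum a b c d : ℝ) -
      if (a = b ∧ c = d) ∨ (a = c ∧ b = d) ∨ (a = d ∧ b = c) then (Fintype.card F : ℝ) else 0| ≤
    3 * (Fintype.card F : ℝ) ^ (3 / 4 : ℝ) + 2 := by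
  have hB : 0 ≤ 3 * (Fintype.card F : ℝ) ^ (3 / 4 : ℝ) := by positivity
  split_ifs with hp
  · have h : |shiftFourSum a b c d - Fintype.card F| ≤ 2 := by
      rcases hp with ⟨rfl, rfl⟩ | ⟨rfl, rfl⟩ | ⟨rfl, rfl⟩
      · exact shiftFourSum_two_pairs a c
      · rw [shiftFourSum_perm (a' := a) (b' := a) (c' := b) (d' := b) fun f => by ring]
        exact shiftFourSum_two_pairs a b
      · rw [shiftFourSum_perm (a' := a) (b' := a) (c' := b) (d' := b) fun f => by ring]
        exact shiftFourSum_two_pairs a b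
    have h' : |(shiftFourSum a b c d : ℝ) - Fintype.card F| ≤ 2 := by exact_mod_cast h
    linarith
  · rw [sub_zero]
    by_cases hd : a ≠ b ∧ a ≠ c ∧ a ≠ d ∧ b ≠ c ∧ b ≠ d ∧ c ≠ d
    · obtain ⟨e, f, hf, h⟩ :=
        shiftFourSum_of_distinct hd.1 hd.2.1 hd.2.2.1 hd.2.2.2.2.1 hd.2.2.2.2.2
      have h4 := cubicSum_pow_four_le hF e hf
      have h4' : |(cubicSum (1, e, f) : ℝ)| ^ 4 ≤
          (3 * (Fintype.card F : ℝ) ^ (3 / 4 : ℝ)) ^ 4 := by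
        have e1 : (3 * (Fintype.card F : ℝ) ^ (3 / 4 : ℝ)) ^ 4 = 81 * (Fintype.card F : ℝ) ^ 3 := by
          rw [mul_pow, ← Real.rpow_natCast, ← Real.rpow_natCast, ← Real.rpow_natCast,
            ← Real.rpow_mul (by positivity)]
          norm_num
        rw [e1, Even.pow_abs (by decide)]
        exact_mod_cast h4
      have h5 := (pow_le_pow_iff_left₀ (abs_nonneg _) hB (by norm_num)).mp h4'
      have h6 : |(shiftFourSum a b c d : ℝ) + 1| ≤ |(cubicSum (1, e, f) : ℝ)| := by
        exact_mod_cast h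
      have h7 := abs_le.mp (h6.trans h5)
      rw [abs_le]
      constructor <;> linarith [h7.1, h7.2]
    · have h : |shiftFourSum a b c d| ≤ 2 := by
        push Not at hp
        obtain ⟨p1, p2, p3⟩ := hp
        by_cases h : a = b
        · subst h; exact shiftFourSum_pair hF (p1 rfl)
        by_cases h : a = c
        · subst h
          rw [shiftFourSum_perm (a' := a) (b' := a) (c' := b) (d' := d) fun f => by ring]
          exact shiftFourSum_pair hF (p2 rfl)
        by_cases h : a = d
        · subst h
          rw [shiftFourSum_perm (a' := a) (b' := a) (c' := b) (d' := c) fun f => by ring]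
          exact shiftFourSum_pair hF (p3 rfl)
        by_cases h : b = c
        · subst h
          rw [shiftFourSum_perm (a' := b) (b' := b) (c' := a) (d' := d) fun f => by ring]
          exact shiftFourSum_pair hF (by tauto)
        by_cases h : b = d
        · subst h
          rw [shiftFourSum_perm (a' := b) (b' := b) (c' := a) (d' := c) fun f => by ring]
          exact shiftFourSum_pair hF (by tauto)
        by_cases h : c = d
        · subst h
          rw [shiftFourSum_perm (a' := c) (b' := c) (c' := a) (d' := b) fun f => by ring]
          exact shiftFourSum_pair hF (by tauto)
        tauto
      have h' : |(shiftFourSum a b c d : ℝ)| ≤ 2 := by exact_mod_cast h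
      linarith

end CharacterSums

section Fourier

variable {F : Type*} [Field F] [Fintype F] [DecidableEq F]

/-- Periodic autocorrelation of a complex function on a finite field. -/
def perCorr (A : F → ℂ) (u : F) : ℂ := ∑ m, A (m + u) * (starRingEnd ℂ) (A m)

/-- Fourier transform with respect to the additive character `ψ`. -/
def charTransform (ψ : AddChar F ℂ) (A : F → ℂ) (j : F) : ℂ := ∑ m, A m * ψ (m * j)

theorem sum_norm_sq_charTransform {ψ : AddChar F ℂ} (hψ : ψ.IsPrimitive) (A : F → ℂ) :
    ∑ j, ‖charTransform ψ A j‖ ^ 2 = Fintype.card F * ∑ m, ‖A m‖ ^ 2 := by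
  have h : ((∑ j, ‖charTransform ψ A j‖ ^ 2 : ℝ) : ℂ) =
      ((Fintype.card F * ∑ m, ‖A m‖ ^ 2 : ℝ) : ℂ) := by
    push_cast
    simp only [← Complex.mul_conj']
    calc ∑ j, charTransform ψ A j * (starRingEnd ℂ) (charTransform ψ A j)
        = ∑ j, ∑ m, ∑ m', A m * (starRingEnd ℂ) (A m') * ψ (j * (m - m')) := by
          refine Finset.sum_congr rfl fun j _ => ?_
          simp only [charTransform, map_sum, map_mul, Finset.sum_mul_sum]
          refine Finset.sum_congr rfl fun m _ => Finset.sum_congr rfl fun m' _ => ?_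
          rw [← AddChar.map_neg_eq_conj]
          have : j * (m - m') = m * j + -(m' * j) := by ring
          rw [this, AddChar.map_add_eq_mul]
          ring
      _ = ∑ m, ∑ m', A m * (starRingEnd ℂ) (A m') * ∑ j, ψ (j * (m - m')) := by
          rw [Finset.sum_comm]
          refine Finset.sum_congr rfl fun m _ => ?_
          rw [Finset.sum_comm]
          simp only [Finset.mul_sum]
      _ = _ := by
          simp only [AddChar.sum_mulShift _ hψ, sub_eq_zero, Finset.mul_sum]
          refine Finset.sum_congr rfl fun m _ => ?_
          simp
          ring
  exact_mod_cast h

theorem charTransform_perCorr {F : Type*} [Field F] [Fintype F] (ψ : AddChar F ℂ) (A : F → ℂ) (j : F) :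
    charTransform ψ (perCorr A) j = (‖charTransform ψ A j‖ ^ 2 : ℝ) := by
  push_cast
  rw [← Complex.mul_conj']
  simp only [charTransform, perCorr, map_sum, map_mul, Finset.sum_mul_sum]
  simp only [Finset.sum_mul]
  rw [Finset.sum_comm, Finset.sum_comm (γ := F) (s := Finset.univ) (t := Finset.univ)
    (f := fun m m' => A m * ψ (m * j) * ((starRingEnd ℂ) (A m') * (starRingEnd ℂ) (ψ (m' * j))))]
  refine Finset.sum_congr rfl fun m _ => ?_
  rw [← Equiv.sum_comp (Equiv.addLeft m)
    (fun m' => A m' * ψ (m' * j) * ((starRingEnd ℂ) (A m) * (starRingEnd ℂ) (ψ (m * j))))]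
  refine Finset.sum_congr rfl fun u _ => ?_
  rw [← AddChar.map_neg_eq_conj]
  simp only [Equiv.coe_addLeft]
  have : u * j = (m + u) * j + -(m * j) := by ring
  rw [this, AddChar.map_add_eq_mul]
  ring

theorem sum_norm_pow_four_charTransform {ψ : AddChar F ℂ} (hψ : ψ.IsPrimitive) (A : F → ℂ) :
    ∑ j, ‖charTransform ψ A j‖ ^ 4 = Fintype.card F * ∑ u, ‖perCorr A u‖ ^ 2 := by
  rw [← sum_norm_sq_charTransform hψ]
  refine Finset.sum_congr rfl fun j _ => ?_
  rw [charTransform_perCorr, Complex.norm_real, Real.norm_of_nonneg (by positivity)]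
  ring

/-- Normalised Fourier coefficients of `d`. -/
def fourierCoeffs (ψ : AddChar F ℂ) (d : F → ℂ) (k : F) : ℂ :=
  (Fintype.card F : ℂ)⁻¹ * charTransform ψ d (-k)

theorem sum_fourierCoeffs {ψ : AddChar F ℂ} (hψ : ψ.IsPrimitive) (d : F → ℂ) (m : F) :
    ∑ k, fourierCoeffs ψ d k * ψ (m * k) = d m := by
  have hn : (Fintype.card F : ℂ) ≠ 0 := by simp
  calc ∑ k, fourierCoeffs ψ d k * ψ (m * k)
      = (Fintype.card F : ℂ)⁻¹ * ∑ m', d m' * ∑ k, ψ (k * (m - m')) := by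
        simp only [fourierCoeffs, charTransform, Finset.mul_sum, Finset.sum_mul]
        rw [Finset.sum_comm]
        refine Finset.sum_congr rfl fun m' _ => Finset.sum_congr rfl fun k _ => ?_
        have : k * (m - m') = m' * -k + m * k := by ring
        rw [this, AddChar.map_add_eq_mul]
        ring
    _ = d m := by
        simp only [AddChar.sum_mulShift _ hψ, sub_eq_zero]
        simp
        field_simp

theorem sum_norm_sq_fourierCoeffs {ψ : AddChar F ℂ} (hψ : ψ.IsPrimitive) (d : F → ℂ) :
    ∑ k, ‖fourierCoeffs ψ d k‖ ^ 2 = (∑ m, ‖d m‖ ^ 2) / Fintype.card F := by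
  have hn : (Fintype.card F : ℝ) ≠ 0 := by simp
  have h := sum_norm_sq_charTransform hψ d
  rw [← Equiv.sum_comp (Equiv.neg F)] at h
  simp only [Equiv.neg_apply] at h
  simp only [fourierCoeffs, norm_mul, mul_pow, ← Finset.mul_sum, h, norm_inv, Complex.norm_natCast]
  field_simp

theorem sum_norm_pow_four_fourierCoeffs {ψ : AddChar F ℂ} (hψ : ψ.IsPrimitive) (d : F → ℂ) :
    ∑ k, ‖fourierCoeffs ψ d k‖ ^ 4 = (∑ u, ‖perCorr d u‖ ^ 2) / (Fintype.card F : ℝ) ^ 3 := by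
  have hn : (Fintype.card F : ℝ) ≠ 0 := by simp
  have h := sum_norm_pow_four_charTransform hψ d
  rw [← Equiv.sum_comp (Equiv.neg F)] at h
  simp only [Equiv.neg_apply] at h
  simp only [fourierCoeffs, norm_mul, mul_pow, ← Finset.mul_sum, h, norm_inv, Complex.norm_natCast]
  field_simp

theorem sum_sq_fourierCoeffs {ψ : AddChar F ℂ} (hψ : ψ.IsPrimitive) (d : F → ℂ) :
    ∑ k, fourierCoeffs ψ d k ^ 2 = (Fintype.card F : ℂ)⁻¹ * ∑ m, d m * d (-m) := by
  calc ∑ k, fourierCoeffs ψ d k ^ 2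
      = ∑ k, fourierCoeffs ψ d k * ((Fintype.card F : ℂ)⁻¹ * ∑ m, d m * ψ (-m * k)) := by
        refine Finset.sum_congr rfl fun k _ => ?_
        rw [sq]
        conv_lhs => rhs; rw [fourierCoeffs, charTransform]
        simp only [mul_neg, neg_mul]
    _ = (Fintype.card F : ℂ)⁻¹ * ∑ m, d m * ∑ k, fourierCoeffs ψ d k * ψ (-m * k) := by
        simp only [Finset.mul_sum]
        rw [Finset.sum_comm]
        refine Finset.sum_congr rfl fun m _ => Finset.sum_congr rfl fun k _ => ?_
        ring
    _ = _ := by simp only [sum_fourierCoeffs hψ]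

/-- The quadratic character with complex values. -/
def quadCharC (a : F) : ℂ := (quadraticChar F a : ℂ)

theorem exists_gaussSum (hF : ringChar F ≠ 2) {ψ : AddChar F ℂ} (hψ : ψ.IsPrimitive) :
    ∃ G : ℂ, ‖G‖ ^ 2 = Fintype.card F ∧ ∀ a, charTransform ψ quadCharC a = quadCharC a * G := by
  set χ : MulChar F ℂ := (quadraticChar F).ringHomComp (Int.castRingHom ℂ) with hχ
  have hχa : ∀ a, χ a = quadCharC a := fun a => rfl
  have hq : χ.IsQuadratic := (quadraticChar_isQuadratic F).comp _
  have h1 : χ ≠ 1 := by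
    rw [hχ, Ne, MulChar.ringHomComp_eq_one_iff (Int.cast_injective)]
    exact quadraticChar_ne_one hF
  refine ⟨gaussSum χ ψ, ?_, ?_⟩
  · have h2 := congrArg norm (gaussSum_sq h1 hq hψ)
    rw [norm_pow, norm_mul, Complex.norm_natCast] at h2
    have h3 : ‖χ (-1)‖ = 1 := by
      rw [hχa, quadCharC]
      rcases quadraticChar_dichotomy (neg_ne_zero.mpr (one_ne_zero (α := F))) with h | h <;>
        simp [h, -quadraticChar_apply]
    rw [h2, h3, one_mul]
  · intro a
    rcases eq_or_ne a 0 with rfl | ha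
    · have : ∑ m : F, quadCharC m = 0 := by
        simp only [quadCharC]
        exact_mod_cast quadraticChar_sum_zero hF
      simp [charTransform, this]
      simp [quadCharC]
    · have h2 := gaussSum_mulShift χ ψ (Units.mk0 a ha)
      have h3 : charTransform ψ quadCharC a = gaussSum χ (ψ.mulShift a) := by
        simp only [charTransform, gaussSum, AddChar.mulShift_apply, hχa, mul_comm a]
      rw [Units.val_mk0] at h2
      rw [h3, ← h2, hχa]
      have h4 : quadCharC a * quadCharC a = 1 := by
        simp only [quadCharC]
        have := quadraticChar_sq_one ha
        rw [sq] at this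
        exact_mod_cast this
      rw [← mul_assoc, h4, one_mul]

theorem sum_norm_sq_perCorr_mul_quadChar (hF : ringChar F ≠ 2) {ψ : AddChar F ℂ}
    (hψ : ψ.IsPrimitive) (d : F → ℂ) :
    ∑ u, ‖perCorr (fun m => d m * quadCharC m) u‖ ^ 2 =
      Fintype.card F * ∑ j, ‖∑ k, fourierCoeffs ψ d k * quadCharC (j + k)‖ ^ 4 := by
  obtain ⟨G, hG, hGa⟩ := exists_gaussSum hF hψ
  have hn : (Fintype.card F : ℝ) ≠ 0 := by simp
  have h := sum_norm_pow_four_charTransform hψ (fun m => d m * quadCharC m)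
  have h2 : ∀ j, charTransform ψ (fun m => d m * quadCharC m) j =
      G * ∑ k, fourierCoeffs ψ d k * quadCharC (j + k) := by
    intro j
    have h3 : ∀ k, quadCharC (j + k) * G = ∑ m, quadCharC m * ψ (m * (j + k)) :=
      fun k => (hGa _).symm
    calc charTransform ψ (fun m => d m * quadCharC m) j
        = ∑ m, (∑ k, fourierCoeffs ψ d k * ψ (m * k)) * quadCharC m * ψ (m * j) := by
          simp only [sum_fourierCoeffs hψ, charTransform]
      _ = ∑ k, fourierCoeffs ψ d k * ∑ m, quadCharC m * ψ (m * (j + k)) := by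
          simp only [Finset.sum_mul, Finset.mul_sum]
          rw [Finset.sum_comm]
          refine Finset.sum_congr rfl fun k _ => Finset.sum_congr rfl fun m _ => ?_
          rw [mul_add, AddChar.map_add_eq_mul]
          ring
      _ = _ := by
          simp only [← h3, Finset.mul_sum]
          refine Finset.sum_congr rfl fun k _ => by ring
  have h4 : ‖G‖ ^ 4 = (Fintype.card F : ℝ) ^ 2 := by rw [← hG]; ring
  simp only [h2, norm_mul, mul_pow, ← Finset.mul_sum, h4] at h
  apply mul_left_cancel₀ hn
  rw [← h]
  ring

theorem sum_paired {F : Type*} [Fintype F] [DecidableEq F] (y : F → ℂ) :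
    ∑ a, ∑ b, ∑ c, ∑ e, y a * (starRingEnd ℂ) (y b) * y c * (starRingEnd ℂ) (y e) *
      (if (a = b ∧ c = e) ∨ (a = c ∧ b = e) ∨ (a = e ∧ b = c) then 1 else 0) =
    ((2 * (∑ k, ‖y k‖ ^ 2) ^ 2 + ‖∑ k, y k ^ 2‖ ^ 2 - 2 * ∑ k, ‖y k‖ ^ 4 : ℝ) : ℂ) := by
  have hind : ∀ a b c e : F,
      (if (a = b ∧ c = e) ∨ (a = c ∧ b = e) ∨ (a = e ∧ b = c) then (1 : ℂ) else 0) =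
      (if a = b then 1 else 0) * (if c = e then 1 else 0) +
      (if a = e then 1 else 0) * (if b = c then 1 else 0) +
      (if a = c then 1 else 0) * (if b = e then 1 else 0) -
      2 * ((if a = b then 1 else 0) * (if b = c then 1 else 0) * (if c = e then 1 else 0)) := by
    intro a b c e
    split_ifs <;> first | (exfalso; grind) | norm_num
  have h1 : ∑ a, ∑ b, ∑ c, ∑ e, y a * (starRingEnd ℂ) (y b) * y c * (starRingEnd ℂ) (y e) *
      ((if a = b then 1 else 0) * (if c = e then 1 else 0)) =
      (∑ k, y k * (starRingEnd ℂ) (y k)) ^ 2 := by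
    simp [sq, Finset.sum_mul_sum, mul_assoc]
  have h2 : ∑ a, ∑ b, ∑ c, ∑ e, y a * (starRingEnd ℂ) (y b) * y c * (starRingEnd ℂ) (y e) *
      ((if a = e then 1 else 0) * (if b = c then 1 else 0)) =
      (∑ k, y k * (starRingEnd ℂ) (y k)) ^ 2 := by
    simp only [sq, Finset.sum_mul_sum]
    refine Finset.sum_congr rfl fun a _ => Finset.sum_congr rfl fun b _ => ?_
    simp
    ring
  have h3 : ∑ a, ∑ b, ∑ c, ∑ e, y a * (starRingEnd ℂ) (y b) * y c * (starRingEnd ℂ) (y e) *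
      ((if a = c then 1 else 0) * (if b = e then 1 else 0)) =
      (∑ k, y k ^ 2) * (starRingEnd ℂ) (∑ k, y k ^ 2) := by
    simp only [map_sum, Finset.sum_mul_sum]
    refine Finset.sum_congr rfl fun a _ => Finset.sum_congr rfl fun b _ => ?_
    simp
    ring
  have h4 : ∑ a, ∑ b, ∑ c, ∑ e, y a * (starRingEnd ℂ) (y b) * y c * (starRingEnd ℂ) (y e) *
      (2 * ((if a = b then 1 else 0) * (if b = c then 1 else 0) * (if c = e then 1 else 0))) =
      2 * ∑ k, (y k * (starRingEnd ℂ) (y k)) ^ 2 := by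
    simp only [Finset.mul_sum]
    refine Finset.sum_congr rfl fun a _ => ?_
    simp
    ring
  simp only [hind, mul_sub, mul_add, Finset.sum_sub_distrib, Finset.sum_add_distrib, h1, h2, h3, h4]
  simp only [Complex.mul_conj']
  push_cast
  simp only [← pow_mul]
  ring

theorem abs_sum_norm_pow_four_sub_le (hF : ringChar F ≠ 2) (y : F → ℂ) :
    |∑ j, ‖∑ k, y k * quadCharC (j + k)‖ ^ 4 - (Fintype.card F : ℝ) *
      (2 * (∑ k, ‖y k‖ ^ 2) ^ 2 + ‖∑ k, y k ^ 2‖ ^ 2 - 2 * ∑ k, ‖y k‖ ^ 4)| ≤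
      (3 * (Fintype.card F : ℝ) ^ (3 / 4 : ℝ) + 2) * (∑ k, ‖y k‖) ^ 4 := by
  set n : ℝ := (Fintype.card F : ℝ)
  have hconj : ∀ a : F, (starRingEnd ℂ) (quadCharC a) = quadCharC a := fun a => by
    simp only [quadCharC, map_intCast]
  have hexp : ((∑ j, ‖∑ k, y k * quadCharC (j + k)‖ ^ 4 : ℝ) : ℂ) =
      ∑ a, ∑ b, ∑ c, ∑ e, y a * (starRingEnd ℂ) (y b) * y c * (starRingEnd ℂ) (y e) *
        ((shiftFourSum a b c e : ℝ) : ℂ) := by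
    push_cast
    have h : ∀ z : ℂ, (‖z‖ : ℂ) ^ 4 = z * (starRingEnd ℂ) z * (z * (starRingEnd ℂ) z) := by
      intro z; rw [Complex.mul_conj']; ring
    calc _ = ∑ j, ∑ a, ∑ b, ∑ c, ∑ e, y a * (starRingEnd ℂ) (y b) * y c * (starRingEnd ℂ) (y e) *
          (quadCharC (j + a) * quadCharC (j + b) * quadCharC (j + c) * quadCharC (j + e)) := by
            refine Finset.sum_congr rfl fun j _ => ?_
            rw [h]
            have h2 : (∑ k, y k * quadCharC (j + k)) * (starRingEnd ℂ) (∑ k, y k * quadCharC (j + k)) =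
                ∑ a, ∑ b, y a * quadCharC (j + a) * ((starRingEnd ℂ) (y b) * quadCharC (j + b)) := by
              simp only [map_sum, map_mul, hconj, Finset.sum_mul_sum]
            rw [h2, Finset.sum_mul]
            refine Finset.sum_congr rfl fun a _ => ?_
            rw [Finset.sum_mul]
            refine Finset.sum_congr rfl fun b _ => ?_
            rw [Finset.mul_sum]
            refine Finset.sum_congr rfl fun c _ => ?_
            rw [Finset.mul_sum]
            exact Finset.sum_congr rfl fun e _ => by ring
      _ = _ := by
            rw [Finset.sum_comm]
            refine Finset.sum_congr rfl fun a _ => ?_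
            rw [Finset.sum_comm]
            refine Finset.sum_congr rfl fun b _ => ?_
            rw [Finset.sum_comm]
            refine Finset.sum_congr rfl fun c _ => ?_
            rw [Finset.sum_comm]
            refine Finset.sum_congr rfl fun e _ => ?_
            simp only [shiftFourSum, quadCharC, ← Finset.mul_sum]
            push_cast
            rfl
  have hdiff : ((∑ j, ‖∑ k, y k * quadCharC (j + k)‖ ^ 4 - n *
      (2 * (∑ k, ‖y k‖ ^ 2) ^ 2 + ‖∑ k, y k ^ 2‖ ^ 2 - 2 * ∑ k, ‖y k‖ ^ 4) : ℝ) : ℂ) =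
      ∑ a, ∑ b, ∑ c, ∑ e, y a * (starRingEnd ℂ) (y b) * y c * (starRingEnd ℂ) (y e) *
        (((shiftFourSum a b c e : ℝ) - if (a = b ∧ c = e) ∨ (a = c ∧ b = e) ∨ (a = e ∧ b = c)
          then n else 0 : ℝ) : ℂ) := by
    rw [Complex.ofReal_sub, hexp, Complex.ofReal_mul, ← sum_paired]
    simp only [Complex.ofReal_sub, mul_sub, Finset.sum_sub_distrib]
    congr 1
    simp only [Finset.mul_sum]
    refine Finset.sum_congr rfl fun a _ => Finset.sum_congr rfl fun b _ =>
      Finset.sum_congr rfl fun c _ => Finset.sum_congr rfl fun e _ => ?_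
    split_ifs <;> simp
    ring
  rw [← Real.norm_eq_abs, ← Complex.norm_real, hdiff]
  have hfin : (3 * n ^ (3 / 4 : ℝ) + 2) * (∑ k, ‖y k‖) ^ 4 = ∑ a, ∑ b, ∑ c, ∑ e,
      ‖y a‖ * ‖y b‖ * ‖y c‖ * ‖y e‖ * (3 * n ^ (3 / 4 : ℝ) + 2) := by
    simp only [← Finset.sum_mul, ← Finset.mul_sum]
    ring
  rw [hfin]
  refine norm_sum_le_of_le _ fun a _ => norm_sum_le_of_le _ fun b _ =>
    norm_sum_le_of_le _ fun c _ => norm_sum_le_of_le _ fun e _ => ?_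
  rw [norm_mul, norm_mul, norm_mul, norm_mul, Complex.norm_real, RCLike.norm_conj, RCLike.norm_conj]
  exact mul_le_mul_of_nonneg_left (abs_shiftFourSum_sub_le hF a b c e) (by positivity)

theorem abs_sum_norm_sq_perCorr_sub_le (hF : ringChar F ≠ 2) {ψ : AddChar F ℂ}
    (hψ : ψ.IsPrimitive) (d : F → ℂ) (hd : ∀ m, ‖d m‖ = 1) :
    |∑ u, ‖perCorr (fun m => d m * quadCharC m) u‖ ^ 2 -
      (2 * (Fintype.card F : ℝ) ^ 2 + ‖∑ m, d m * d (-m)‖ ^ 2 -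
        2 / (Fintype.card F : ℝ) * ∑ u, ‖perCorr d u‖ ^ 2)| ≤
      Fintype.card F * ((3 * (Fintype.card F : ℝ) ^ (3 / 4 : ℝ) + 2) *
        (∑ k, ‖fourierCoeffs ψ d k‖) ^ 4) := by
  have hn : (Fintype.card F : ℝ) ≠ 0 := by simp
  have h := abs_sum_norm_pow_four_sub_le hF (fourierCoeffs ψ d)
  rw [sum_norm_sq_fourierCoeffs hψ, sum_norm_pow_four_fourierCoeffs hψ, sum_sq_fourierCoeffs hψ]
    at h
  rw [sum_norm_sq_perCorr_mul_quadChar hF hψ]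
  refine le_trans (le_of_eq ?_) (mul_le_mul_of_nonneg_left h (Nat.cast_nonneg _))
  rw [← abs_of_nonneg (Nat.cast_nonneg (α := ℝ) (Fintype.card F)), ← abs_mul]
  congr 1
  simp only [hd, norm_mul, norm_inv, Complex.norm_natCast, Nat.abs_cast]
  simp
  field_simp

end Fourier

section Window

theorem sum_range_of_eq_add {n a b : ℕ} (h : n = a + b) {M : Type*} [AddCommMonoid M] (f : ℕ → M) :
    ∑ i ∈ Finset.range n, f i = ∑ i ∈ Finset.range a, f i + ∑ i ∈ Finset.range b, f (a + i) := by
  rw [h, Finset.sum_range_add]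

theorem ZMod.sum_eq_sum_range {n : ℕ} [NeZero n] {M : Type*} [AddCommMonoid M] (f : ZMod n → M) :
    ∑ m, f m = ∑ i ∈ Finset.range n, f i := by
  refine Finset.sum_nbij' ZMod.val Nat.cast ?_ ?_ ?_ ?_ ?_
  · intro a _; exact Finset.mem_range.mpr (ZMod.val_lt a)
  · intro a _; exact Finset.mem_univ _
  · intro a _; exact ZMod.natCast_zmod_val a
  · intro a ha; exact ZMod.val_cast_of_lt (Finset.mem_range.mp ha)
  · intro a _; rw [ZMod.natCast_zmod_val]

theorem ZMod.sum_eq_sum_range_add {n : ℕ} [NeZero n] {M : Type*} [AddCommMonoid M]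
    (f : ZMod n → M) (r : ZMod n) : ∑ m, f m = ∑ i ∈ Finset.range n, f (i + r) := by
  rw [← Equiv.sum_comp (Equiv.addRight r), ZMod.sum_eq_sum_range]
  rfl

/-- Aperiodic autocorrelation of the window of `g` of full length starting at `r`. -/
def winCorr {n : ℕ} (g : ZMod n → ℝ) (r : ZMod n) (u : ℕ) : ℝ :=
  ∑ i ∈ Finset.range (n - u), g (i + r) * g (i + u + r)

/-- The function `m ↦ w ^ j`, where `0 ≤ j < n` represents `m - r`. -/
def twist {n : ℕ} (w : ℂ) (r : ZMod n) (m : ZMod n) : ℂ := w ^ (m - r).val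

theorem perCorr_twist_mul {p : ℕ} [Fact p.Prime] {w : ℂ} (hw : ‖w‖ = 1) {σ : ℝ}
    (hσ : w ^ p = σ) (g : ZMod p → ℝ) (r : ZMod p) {u : ℕ} (hu : u < p) :
    perCorr (fun m => twist w r m * g m) (u : ZMod p) =
      w ^ u * ((winCorr g r u + σ * winCorr g r (p - u) : ℝ) : ℂ) := by
  have hww : w * (starRingEnd ℂ) w = 1 := by rw [Complex.mul_conj', hw]; simp
  have hww' : ∀ i : ℕ, w ^ i * (starRingEnd ℂ) w ^ i = 1 := fun i => by
    rw [← mul_pow, hww, one_pow]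
  have hσc : (starRingEnd ℂ) w ^ p = σ := by
    rw [← map_pow, hσ, Complex.conj_ofReal]
  rw [perCorr, ZMod.sum_eq_sum_range_add _ r]
  rw [sum_range_of_eq_add (show p = (p - u) + u by omega)]
  have h1 : ∀ i ∈ Finset.range (p - u), twist w r ((i : ZMod p) + r + u) * g (i + r + u) *
      (starRingEnd ℂ) (twist w r ((i : ZMod p) + r) * g (i + r)) =
      w ^ u * ((g (i + r) * g (i + u + r) : ℝ) : ℂ) := by
    intro i hi
    have hi' := Finset.mem_range.mp hi
    have e1 : ((i : ZMod p) + r + u - r).val = i + u := by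
      rw [show (i : ZMod p) + r + u - r = ((i + u : ℕ) : ZMod p) by push_cast; ring]
      exact ZMod.val_cast_of_lt (by omega)
    have e2 : ((i : ZMod p) + r - r).val = i := by
      rw [add_sub_cancel_right]
      exact ZMod.val_cast_of_lt (by omega)
    have e3 : (i : ZMod p) + r + u = i + u + r := by ring
    rw [twist, twist, e1, e2, e3]
    simp only [map_mul, map_pow, Complex.conj_ofReal]
    push_cast
    rw [pow_add]
    linear_combination (w ^ u * g (i + u + r) * g (i + r)) * hww' i
  have h2 : ∀ i ∈ Finset.range u, twist w r (((p - u + i : ℕ) : ZMod p) + r + u) *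
      g (((p - u + i : ℕ) : ZMod p) + r + u) *
      (starRingEnd ℂ) (twist w r (((p - u + i : ℕ) : ZMod p) + r) * g (((p - u + i : ℕ) : ZMod p) + r)) =
      w ^ u * (σ * (g (i + r) * g (i + (p - u : ℕ) + r) : ℝ) : ℂ) := by
    intro i hi
    have hi' := Finset.mem_range.mp hi
    have e0 : ((p - u + i : ℕ) : ZMod p) + r + u = i + r := by
      have : ((p - u + i + u : ℕ) : ZMod p) = (i : ZMod p) := by
        rw [show p - u + i + u = p + i by omega]; simp
      rw [← this]; push_cast; ring
    have e1 : ((i : ZMod p) + r - r).val = i := by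
      rw [add_sub_cancel_right]
      exact ZMod.val_cast_of_lt (by omega)
    have e2 : (((p - u + i : ℕ) : ZMod p) + r - r).val = p - u + i := by
      rw [add_sub_cancel_right]
      exact ZMod.val_cast_of_lt (by omega)
    have e3 : ((p - u + i : ℕ) : ZMod p) + r = i + (p - u : ℕ) + r := by push_cast; ring
    rw [e0, twist, twist, e1, e2, e3]
    simp only [map_mul, map_pow, Complex.conj_ofReal]
    have e4 : (starRingEnd ℂ) w ^ (p - u) = w ^ u * σ := by
      rw [← hσc]
      conv_rhs => rw [show p = (p - u) + u by omega, pow_add]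
      linear_combination (-(starRingEnd ℂ) w ^ (p - u)) * hww' u
    push_cast
    rw [pow_add, e4]
    linear_combination (w ^ u * σ * g (i + (p - u : ℕ) + r) * g (i + r)) * hww' i
  rw [Finset.sum_congr rfl h1, Finset.sum_congr rfl h2, ← Finset.mul_sum, ← Finset.mul_sum,
    ← mul_add]
  congr 1
  rw [winCorr, winCorr, show p - (p - u) = u by omega]
  push_cast
  rw [Finset.mul_sum]

theorem sum_norm_sq_perCorr_twist_mul {p : ℕ} [Fact p.Prime] {w : ℂ} (hw : ‖w‖ = 1) {σ : ℝ}
    (hσ : w ^ p = σ) (g : ZMod p → ℝ) (r : ZMod p) :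
    ∑ u, ‖perCorr (fun m => twist w r m * g m) u‖ ^ 2 =
      ∑ u ∈ Finset.range p, (winCorr g r u + σ * winCorr g r (p - u)) ^ 2 := by
  rw [ZMod.sum_eq_sum_range]
  refine Finset.sum_congr rfl fun u hu => ?_
  rw [perCorr_twist_mul hw hσ g r (Finset.mem_range.mp hu), norm_mul, norm_pow, hw,
    Complex.norm_real, one_pow, one_mul, Real.norm_eq_abs, sq_abs]

/-- Sum of the squares of all aperiodic autocorrelations of the window of `g` starting at `r`. -/
def winEnergy {p : ℕ} (g : ZMod p → ℝ) (r : ZMod p) : ℝ :=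
  ∑ u ∈ Finset.range p, (winCorr g r u ^ 2 + winCorr g r (p - u) ^ 2)

/-- The primitive root of unity `exp (π i / p)` of order `2 p`. -/
def halfRoot (p : ℕ) : ℂ := Complex.exp ((Real.pi / p : ℝ) * Complex.I)

theorem norm_halfRoot (p : ℕ) : ‖halfRoot p‖ = 1 := Complex.norm_exp_ofReal_mul_I _

theorem halfRoot_pow {p : ℕ} (hp : p ≠ 0) : halfRoot p ^ p = ((-1 : ℝ) : ℂ) := by
  have hp' : (p : ℂ) ≠ 0 := by exact_mod_cast hp
  rw [halfRoot, ← Complex.exp_nat_mul]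
  push_cast
  rw [← Complex.exp_pi_mul_I]
  congr 1
  field_simp

theorem winEnergy_eq {p : ℕ} [Fact p.Prime] (g : ZMod p → ℝ) (r : ZMod p) :
    winEnergy g r = (∑ u, ‖perCorr (fun m => twist (halfRoot p) r m * g m) u‖ ^ 2 +
      ∑ u, ‖perCorr (fun m => (g m : ℂ)) u‖ ^ 2) / 2 := by
  have h1 := sum_norm_sq_perCorr_twist_mul (norm_halfRoot p)
    (halfRoot_pow (Fact.out : p.Prime).ne_zero) g r
  have h2 := sum_norm_sq_perCorr_twist_mul (p := p) (w := 1) (σ := 1) (by simp) (by simp) g r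
  simp only [twist, one_pow, one_mul] at h2
  rw [h1, h2, winEnergy, ← Finset.sum_add_distrib, Finset.sum_div]
  exact Finset.sum_congr rfl fun u _ => by ring

theorem sum_norm_sq_perCorr_halfRoot {p : ℕ} [Fact p.Prime] (r : ZMod p) :
    ∑ u, ‖perCorr (twist (halfRoot p) r) u‖ ^ 2 = ((p : ℝ) ^ 3 + 2 * p) / 3 := by
  have h1 := sum_norm_sq_perCorr_twist_mul (norm_halfRoot p)
    (halfRoot_pow (Fact.out : p.Prime).ne_zero) (fun _ => 1) r
  simp only [Complex.ofReal_one, mul_one] at h1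
  have h0 : (fun m => twist (halfRoot p) r m) = twist (halfRoot p) r := rfl
  rw [h0] at h1
  rw [h1]
  have h2 : ∀ u ∈ Finset.range p, (winCorr (fun _ => 1) r u + -1 * winCorr (fun _ => 1) r (p - u)) ^ 2
      = ((p : ℝ) - 2 * u) ^ 2 := by
    intro u hu
    have hu' := (Finset.mem_range.mp hu).le
    simp only [winCorr, mul_one, Finset.sum_const, Finset.card_range, nsmul_eq_mul]
    rw [show p - (p - u) = u by omega, Nat.cast_sub hu']
    ring
  rw [Finset.sum_congr rfl h2]
  have h3 : ∀ (c : ℝ) (n : ℕ), ∑ u ∈ Finset.range n, (c - 2 * (u : ℝ)) ^ 2 =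
      n * c ^ 2 - 2 * c * n * (n - 1) + 2 * n * (n - 1) * (2 * n - 1) / 3 := by
    intro c n
    induction n with
    | zero => simp
    | succ k ih => rw [Finset.sum_range_succ, ih]; push_cast; ring
  rw [h3]
  ring

theorem ringChar_zmod_ne_two {p : ℕ} [Fact p.Prime] (hp : p ≠ 2) : ringChar (ZMod p) ≠ 2 := by
  rwa [ZMod.ringChar_zmod_n]

theorem sum_norm_sq_perCorr_quadChar {p : ℕ} [Fact p.Prime] (hp : p ≠ 2) :
    ∑ u : ZMod p, ‖perCorr quadCharC u‖ ^ 2 = (p : ℝ) * (p - 1) := by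
  have h : ∀ u : ZMod p, ‖perCorr quadCharC u‖ ^ 2 = (if u = 0 then (p : ℝ) * (p - 2) else 0) + 1 := by
    intro u
    have h1 : perCorr quadCharC u =
        (((∑ x, quadraticChar (ZMod p) x * quadraticChar (ZMod p) (x + u) : ℤ) : ℝ) : ℂ) := by
      simp only [perCorr, quadCharC, map_intCast]
      push_cast
      exact Finset.sum_congr rfl fun x _ => mul_comm _ _
    rw [h1, sum_quadraticChar_mul_add (ringChar_zmod_ne_two hp), Complex.norm_real,
      Real.norm_eq_abs, sq_abs, ZMod.card]
    split_ifs <;> push_cast <;> ring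
  simp only [h, Finset.sum_add_distrib]
  simp
  ring

theorem norm_sum_twist_mul_neg {p : ℕ} [Fact p.Prime] (r : ZMod p) :
    ‖∑ m, twist (halfRoot p) r m * twist (halfRoot p) r (-m)‖ ^ 2 =
      (2 * ((-2 * r).val : ℝ) + 2 - p) ^ 2 := by
  set w := halfRoot p
  set N := (-2 * r).val with hN
  have hNp : N < p := ZMod.val_lt _
  have hNr : ((N : ℕ) : ZMod p) = -2 * r := ZMod.natCast_zmod_val _
  have hwp : w ^ p = -1 := by
    rw [halfRoot_pow (Fact.out : p.Prime).ne_zero]; push_cast; rfl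
  rw [ZMod.sum_eq_sum_range_add _ r]
  rw [sum_range_of_eq_add (show p = (N + 1) + (p - N - 1) by omega)]
  have e1 : ∀ i < p, ((i : ZMod p) + r - r).val = i := by
    intro i hi
    rw [add_sub_cancel_right]
    exact ZMod.val_cast_of_lt hi
  have h1 : ∀ i ∈ Finset.range (N + 1), twist w r ((i : ZMod p) + r) * twist w r (-((i : ZMod p) + r))
      = w ^ N := by
    intro i hi
    have hi' := Finset.mem_range.mp hi
    have e2 : (-((i : ZMod p) + r) - r).val = N - i := by
      rw [show -((i : ZMod p) + r) - r = ((N - i : ℕ) : ZMod p) by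
        rw [Nat.cast_sub (by omega), hNr]; ring]
      exact ZMod.val_cast_of_lt (by omega)
    rw [twist, twist, e1 i (by omega), e2, ← pow_add]
    congr 1; omega
  have h2 : ∀ i ∈ Finset.range (p - N - 1), twist w r (((N + 1 + i : ℕ) : ZMod p) + r) *
      twist w r (-(((N + 1 + i : ℕ) : ZMod p) + r)) = -w ^ N := by
    intro i hi
    have hi' := Finset.mem_range.mp hi
    have e2 : (-(((N + 1 + i : ℕ) : ZMod p) + r) - r).val = p - 1 - i := by
      rw [show -(((N + 1 + i : ℕ) : ZMod p) + r) - r = ((p - 1 - i : ℕ) : ZMod p) by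
        rw [Nat.cast_sub (by omega), Nat.cast_sub (by omega)]
        push_cast
        rw [hNr, ZMod.natCast_self]; ring]
      exact ZMod.val_cast_of_lt (by omega)
    rw [twist, twist, e1 _ (by omega), e2, ← pow_add,
      show N + 1 + i + (p - 1 - i) = N + p by omega, pow_add, hwp]
    ring
  rw [Finset.sum_congr rfl h1, Finset.sum_congr rfl h2]
  simp only [Finset.sum_const, Finset.card_range, nsmul_eq_mul]
  have h3 : ((N + 1 : ℕ) : ℂ) * w ^ N + ((p - N - 1 : ℕ) : ℂ) * -w ^ N =
      w ^ N * ((2 * (N : ℝ) + 2 - p : ℝ) : ℂ) := by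
    rw [Nat.sub_sub, Nat.cast_sub (by omega)]
    push_cast
    ring
  rw [h3, norm_mul, norm_pow, norm_halfRoot, one_pow, one_mul, Complex.norm_real,
    Real.norm_eq_abs, sq_abs]

theorem norm_exp_mul_I_sub_one (x : ℝ) : ‖Complex.exp (x * Complex.I) - 1‖ = 2 * |Real.sin (x / 2)| := by
  rw [mul_comm, Complex.norm_exp_I_mul_ofReal_sub_one, norm_mul, Real.norm_eq_abs, Real.norm_eq_abs]
  norm_num

theorem inv_abs_sin_le {p k : ℕ} (hk : 1 ≤ k) (hkp : k < p) :
    ((p : ℝ) * |Real.sin (Real.pi / p * (1 - 2 * k) / 2)|)⁻¹ ≤ (k : ℝ)⁻¹ + ((p - k : ℕ) : ℝ)⁻¹ := by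
  have hp : (0 : ℝ) < p := by exact_mod_cast (by omega : 0 < p)
  have hk0 : (1 : ℝ) ≤ k := by exact_mod_cast hk
  have hkp' : (k : ℝ) + 1 ≤ p := by exact_mod_cast hkp
  have hpi := Real.pi_pos
  set x : ℝ := Real.pi / p * (2 * k - 1) / 2 with hx
  have hneg : Real.pi / p * (1 - 2 * k) / 2 = -x := by rw [hx]; ring
  rw [hneg, Real.sin_neg, abs_neg]
  have hx0 : 0 ≤ x := by
    have : (0 : ℝ) ≤ 2 * k - 1 := by linarith
    positivity
  rcases le_total x (Real.pi / 2) with h | h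
  · have h1 := Real.mul_le_sin hx0 h
    have h2 : (k : ℝ) ≤ p * |Real.sin x| := by
      calc (k : ℝ) ≤ 2 * k - 1 := by linarith
        _ = p * (2 / Real.pi * x) := by rw [hx]; field_simp
        _ ≤ p * |Real.sin x| := by gcongr; exact h1.trans (le_abs_self _)
    have h3 := inv_anti₀ (by linarith) h2
    have h4 : (0 : ℝ) ≤ ((p - k : ℕ) : ℝ)⁻¹ := by positivity
    linarith
  · have hxp : x ≤ Real.pi := by
      rw [hx]
      have : Real.pi / p * (2 * k - 1) / 2 = Real.pi * ((2 * k - 1) / (2 * p)) := by field_simp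
      rw [this]
      refine mul_le_of_le_one_right hpi.le ?_
      rw [div_le_one (by positivity)]
      linarith
    have h1 := Real.mul_le_sin (x := Real.pi - x) (by linarith) (by linarith)
    rw [Real.sin_pi_sub] at h1
    have h2 : ((p - k : ℕ) : ℝ) ≤ p * |Real.sin x| := by
      rw [Nat.cast_sub hkp.le]
      calc (p : ℝ) - k ≤ 2 * p - (2 * k - 1) := by linarith
        _ = p * (2 / Real.pi * (Real.pi - x)) := by rw [hx]; field_simp
        _ ≤ p * |Real.sin x| := by gcongr; exact h1.trans (le_abs_self _)
    have h3 := inv_anti₀ (by rw [Nat.cast_sub hkp.le]; linarith) h2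
    have h4 : (0 : ℝ) ≤ (k : ℝ)⁻¹ := by positivity
    linarith

theorem norm_fourierCoeffs_twist {p : ℕ} [Fact p.Prime] (r : ZMod p) (k : ℕ) :
    ‖fourierCoeffs ZMod.stdAddChar (twist (halfRoot p) r) (k : ZMod p)‖ =
      ((p : ℝ) * |Real.sin (Real.pi / p * (1 - 2 * k) / 2)|)⁻¹ := by
  have hp0 : (p : ℝ) ≠ 0 := by exact_mod_cast (Fact.out : p.Prime).ne_zero
  have hp0' : (p : ℂ) ≠ 0 := by exact_mod_cast (Fact.out : p.Prime).ne_zero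
  set ψ : AddChar (ZMod p) ℂ := ZMod.stdAddChar
  set z : ℂ := halfRoot p * ψ (-k) with hz
  have hψp : ψ (-k) ^ p = 1 := by
    rw [← AddChar.map_nsmul_eq_pow]; simp
  have hzp : z ^ p = -1 := by
    rw [hz, mul_pow, hψp, halfRoot_pow (Fact.out : p.Prime).ne_zero]; simp
  have hz1 : z ≠ 1 := by
    intro h; rw [h, one_pow] at hzp; norm_num at hzp
  have hsum : charTransform ψ (twist (halfRoot p) r) (-k) = ψ (r * -k) * ∑ i ∈ Finset.range p, z ^ i := by
    rw [charTransform, ZMod.sum_eq_sum_range_add _ r, Finset.mul_sum]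
    refine Finset.sum_congr rfl fun i hi => ?_
    have e1 : ((i : ZMod p) + r - r).val = i := by
      rw [add_sub_cancel_right]
      exact ZMod.val_cast_of_lt (Finset.mem_range.mp hi)
    rw [twist, e1, add_mul, AddChar.map_add_eq_mul, hz, mul_pow, ← AddChar.map_nsmul_eq_pow,
      nsmul_eq_mul]
    ring
  have hzexp : z = Complex.exp ((Real.pi / p * (1 - 2 * k) : ℝ) * Complex.I) := by
    have h1 : ψ (-k) = Complex.exp (2 * Real.pi * Complex.I * (-k : ℤ) / p) := by
      rw [← ZMod.stdAddChar_coe]; push_cast; rfl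
    rw [hz, h1, halfRoot, ← Complex.exp_add]
    congr 1
    push_cast
    field_simp
    ring
  rw [fourierCoeffs, hsum, geom_sum_eq hz1, hzp, norm_mul, norm_mul, AddChar.norm_apply, norm_div,
    hzexp, norm_exp_mul_I_sub_one, ZMod.card, norm_inv, Complex.norm_natCast]
  norm_num
  rw [← div_eq_inv_mul]
  ring

theorem sum_norm_fourierCoeffs_twist_le {p : ℕ} [Fact p.Prime] (r : ZMod p) :
    ∑ k, ‖fourierCoeffs ZMod.stdAddChar (twist (halfRoot p) r) k‖ ≤ 3 + 2 * Real.log p := by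
  have hp : 2 ≤ p := (Fact.out : p.Prime).two_le
  rw [ZMod.sum_eq_sum_range, sum_range_of_eq_add (show p = 1 + (p - 1) by omega), Finset.sum_range_one]
  have h0 : ‖fourierCoeffs ZMod.stdAddChar (twist (halfRoot p) r) ((0 : ℕ) : ZMod p)‖ ≤ 1 := by
    rw [norm_fourierCoeffs_twist r 0]
    have hp0 : (2 : ℝ) ≤ p := by exact_mod_cast hp
    have h1 := Real.mul_le_sin (x := Real.pi / p * (1 - 2 * (0 : ℕ)) / 2) (by simp; positivity) (by
      have : Real.pi / p ≤ Real.pi := div_le_self Real.pi_pos.le (by linarith)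
      simp; linarith)
    apply inv_le_one_of_one_le₀
    calc (1 : ℝ) = p * (2 / Real.pi * (Real.pi / p * (1 - 2 * (0 : ℕ)) / 2)) := by
          have := Real.pi_pos
          simp; field_simp
      _ ≤ _ := by gcongr; exact h1.trans (le_abs_self _)
  have h1 : ∑ i ∈ Finset.range (p - 1), ‖fourierCoeffs ZMod.stdAddChar (twist (halfRoot p) r)
      ((1 + i : ℕ) : ZMod p)‖ ≤
      ∑ i ∈ Finset.range (p - 1), (((i + 1 : ℕ) : ℝ)⁻¹ + (((p - 1 - 1 - i) + 1 : ℕ) : ℝ)⁻¹) := by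
    refine Finset.sum_le_sum fun i hi => ?_
    have hi' := Finset.mem_range.mp hi
    rw [norm_fourierCoeffs_twist r _]
    refine (inv_abs_sin_le (by omega) (by omega)).trans (le_of_eq ?_)
    rw [add_comm 1 i, show p - (i + 1) = (p - 1 - 1 - i) + 1 by omega]
  have h2 : ∑ i ∈ Finset.range (p - 1), ((i + 1 : ℕ) : ℝ)⁻¹ ≤ 1 + Real.log p := by
    have h3 := harmonic_le_one_add_log (p - 1)
    rw [harmonic] at h3
    push_cast at h3 ⊢
    refine h3.trans ?_
    gcongr
    · have : 1 ≤ p - 1 := by omega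
      have : (1 : ℝ) ≤ ((p - 1 : ℕ) : ℝ) := by exact_mod_cast this
      linarith
    · omega
  rw [Finset.sum_add_distrib, Finset.sum_range_reflect (fun i => ((i + 1 : ℕ) : ℝ)⁻¹)] at h1
  linarith

/-- Real-valued quadratic character. -/
def quadCharR {p : ℕ} [Fact p.Prime] (m : ZMod p) : ℝ := (quadraticChar (ZMod p) m : ℝ)

theorem abs_winEnergy_quadChar_sub_le {p : ℕ} [Fact p.Prime] (hp : p ≠ 2) (r : ZMod p) :
    |winEnergy quadCharR r / (p : ℝ) ^ 2 -
      (7 / 6 - 1 / (2 * p) - 2 / (3 * (p : ℝ) ^ 2) + ((2 * ((-2 * r).val : ℝ) + 2 - p) / p) ^ 2 / 2)| ≤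
      (3 * (p : ℝ) ^ (3 / 4 : ℝ) + 2) * (3 + 2 * Real.log p) ^ 4 / p := by
  have hp0 : (0 : ℝ) < p := by exact_mod_cast (Fact.out : p.Prime).pos
  have h1 := abs_sum_norm_sq_perCorr_sub_le (ringChar_zmod_ne_two hp)
    (ZMod.isPrimitive_stdAddChar p) (twist (halfRoot p) r)
    (fun m => by rw [twist, norm_pow, norm_halfRoot, one_pow])
  rw [sum_norm_sq_perCorr_halfRoot, norm_sum_twist_mul_neg, ZMod.card] at h1
  have h2 := winEnergy_eq quadCharR r
  have h3 : (fun m : ZMod p => ((quadCharR m : ℝ) : ℂ)) = quadCharC := by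
    ext m; simp only [quadCharR, quadCharC, Complex.ofReal_intCast]
  have h4 : (fun m : ZMod p => twist (halfRoot p) r m * ((quadCharR m : ℝ) : ℂ)) =
      fun m => twist (halfRoot p) r m * quadCharC m := by
    ext m; simp only [quadCharR, quadCharC, Complex.ofReal_intCast]
  rw [h3, h4, sum_norm_sq_perCorr_quadChar hp] at h2
  have h5 : winEnergy quadCharR r / (p : ℝ) ^ 2 -
      (7 / 6 - 1 / (2 * p) - 2 / (3 * (p : ℝ) ^ 2) + ((2 * ((-2 * r).val : ℝ) + 2 - p) / p) ^ 2 / 2) =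
      (∑ u, ‖perCorr (fun m => twist (halfRoot p) r m * quadCharC m) u‖ ^ 2 -
        (2 * (p : ℝ) ^ 2 + (2 * ((-2 * r).val : ℝ) + 2 - p) ^ 2 -
          2 / p * (((p : ℝ) ^ 3 + 2 * p) / 3))) / (2 * (p : ℝ) ^ 2) := by
    rw [h2]
    field_simp
    ring
  rw [h5, abs_div, abs_of_pos (show (0 : ℝ) < 2 * (p : ℝ) ^ 2 by positivity)]
  rw [div_le_iff₀ (by positivity)]
  refine h1.trans ?_
  have h6 := sum_norm_fourierCoeffs_twist_le r
  have h7 : (∑ k, ‖fourierCoeffs ZMod.stdAddChar (twist (halfRoot p) r) k‖) ^ 4 ≤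
      (3 + 2 * Real.log p) ^ 4 := by gcongr
  have h8 : (0 : ℝ) ≤ 3 * (p : ℝ) ^ (3 / 4 : ℝ) + 2 := by positivity
  calc _ ≤ (p : ℝ) * ((3 * (p : ℝ) ^ (3 / 4 : ℝ) + 2) * (3 + 2 * Real.log p) ^ 4) := by gcongr
    _ ≤ 2 * ((p : ℝ) * ((3 * (p : ℝ) ^ (3 / 4 : ℝ) + 2) * (3 + 2 * Real.log p) ^ 4)) := by
      have : 0 ≤ (p : ℝ) * ((3 * (p : ℝ) ^ (3 / 4 : ℝ) + 2) * (3 + 2 * Real.log p) ^ 4) := by positivity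
      linarith
    _ = _ := by field_simp

end Window

theorem abs_two_mul_emod_sub_le {p : ℕ} (hp : Odd p) {s : ℝ} (hs1 : -(1/2) < s) (hs2 : s ≤ 1/2)
    (hps : 1 ≤ (p : ℝ) * (1 / 2 + s)) :
    abs (|2 * ((-2 * ⌊(p : ℝ) * s⌋ % (p : ℤ) : ℤ) : ℝ) + 2 - p| - |p - 4 * |s| * p|) ≤ 6 := by
  have hp0 : (0 : ℝ) < p := by exact_mod_cast hp.pos
  set r : ℤ := ⌊(p : ℝ) * s⌋ with hr
  have hr1 : (r : ℝ) ≤ p * s := Int.floor_le _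
  have hr2 : (p : ℝ) * s < r + 1 := Int.lt_floor_add_one _
  obtain ⟨m, hm⟩ := hp
  rcases le_or_gt 0 s with h | h
  · have hr0 : 0 ≤ r := Int.floor_nonneg.mpr (by positivity)
    have hrp : 2 * r ≤ p := by
      have : (2 * r : ℝ) ≤ p := by nlinarith
      exact_mod_cast this
    rw [abs_of_nonneg h]
    rcases eq_or_lt_of_le hr0 with h0 | h0
    · rw [← h0] at hr1 hr2 ⊢
      simp only [mul_zero, Int.zero_emod, Int.cast_zero]
      rw [← abs_neg ((0 : ℝ) + 2 - p)]
      refine (abs_abs_sub_abs_le_abs_sub _ _).trans ?_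
      rw [abs_le]
      push_cast at hr1 hr2
      constructor <;> linarith
    · have e : -2 * r % (p : ℤ) = p - 2 * r := by
        rw [← Int.add_emod_right, Int.emod_eq_of_lt (by omega) (by omega)]
        ring
      rw [e]
      refine (abs_abs_sub_abs_le_abs_sub _ _).trans ?_
      rw [abs_le]
      push_cast
      constructor <;> linarith
  · have hr0 : r < 0 := Int.floor_lt_zero.mpr (mul_neg_of_pos_of_neg hp0 h) 
    have hrp : -2 * r < p := by
      have : (-2 * r : ℝ) < p := by linarith
      exact_mod_cast this
    rw [abs_of_neg h, Int.emod_eq_of_lt (by omega) hrp, ← abs_neg ((p : ℝ) - _)]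
    refine (abs_abs_sub_abs_le_abs_sub _ _).trans ?_
    rw [abs_le]
    push_cast
    constructor <;> linarith

theorem tendsto_rotation_term {s : ℝ} (hs1 : -(1/2) < s) (hs2 : s ≤ 1/2) {p : ℕ → ℕ}
    (hp : ∀ k, Odd (p k)) (hlim : Filter.Tendsto p Filter.atTop Filter.atTop) :
    Filter.Tendsto (fun k => ((2 * ((-2 * ⌊(p k : ℝ) * s⌋ % (p k : ℤ) : ℤ) : ℝ) + 2 - p k) / p k) ^ 2)
      Filter.atTop (nhds ((1 - 4 * |s|) ^ 2)) := by
  have hlim' : Filter.Tendsto (fun k => (p k : ℝ)) Filter.atTop Filter.atTop :=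
    tendsto_natCast_atTop_atTop.comp hlim
  have h1 : Filter.Tendsto (fun k => |(2 * ((-2 * ⌊(p k : ℝ) * s⌋ % (p k : ℤ) : ℤ) : ℝ) + 2 - p k) / p k|)
      Filter.atTop (nhds (abs (1 - 4 * |s|))) := by
    rw [tendsto_iff_dist_tendsto_zero]
    have h6 : Filter.Tendsto (fun k => 6 / (p k : ℝ)) Filter.atTop (nhds 0) :=
      hlim'.const_div_atTop 6
    refine squeeze_zero' (Filter.Eventually.of_forall fun _ => dist_nonneg) ?_ h6
    filter_upwards [hlim'.eventually_ge_atTop (1 / (1 / 2 + s))] with k hk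
    have hs : 0 < 1 / 2 + s := by linarith
    have hp0 : (0 : ℝ) < p k := by exact_mod_cast (hp k).pos
    have h := abs_two_mul_emod_sub_le (hp k) hs1 hs2 ((div_le_iff₀ hs).mp hk)
    rw [Real.dist_eq, abs_div, abs_of_pos hp0]
    have e : abs (1 - 4 * |s|) = |(p k : ℝ) - 4 * |s| * p k| / p k := by
      rw [show (p k : ℝ) - 4 * |s| * p k = (1 - 4 * |s|) * p k by ring, abs_mul, abs_of_pos hp0]
      field_simp
    rw [e, ← sub_div, abs_div, abs_of_pos hp0]
    gcongr
  simpa only [sq_abs] using h1.pow 2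

theorem tendsto_rpow_mul_log_div :
    Filter.Tendsto (fun x : ℝ => (3 * x ^ (3 / 4 : ℝ) + 2) * (3 + 2 * Real.log x) ^ 4 / x)
      Filter.atTop (nhds 0) := by
  have h1 : Filter.Tendsto (fun x : ℝ => Real.log x / x ^ (1 / 16 : ℝ)) Filter.atTop (nhds 0) :=
    (isLittleO_log_rpow_atTop (by norm_num)).tendsto_div_nhds_zero
  have h2 : ∀ c : ℝ, 0 < c → Filter.Tendsto (fun x : ℝ => x ^ (-c)) Filter.atTop (nhds 0) :=
    fun c hc => tendsto_rpow_neg_atTop hc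
  have h3 := ((((h2 (3 / 4) (by norm_num)).const_mul 2).const_add 3)).mul
    ((((h2 (1 / 16) (by norm_num)).const_mul 3).add (h1.const_mul 2)).pow 4)
  simp only [mul_zero, add_zero, ne_eq, OfNat.ofNat_ne_zero, not_false_eq_true, zero_pow] at h3
  refine h3.congr' ?_
  filter_upwards [Filter.eventually_gt_atTop 0] with x hx
  have e1 : x = x ^ (3 / 4 : ℝ) * (x ^ (1 / 16 : ℝ)) ^ 4 := by
    rw [← Real.rpow_natCast, ← Real.rpow_mul hx.le, ← Real.rpow_add hx]
    norm_num
  rw [Real.rpow_neg hx.le, Real.rpow_neg hx.le]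
  have ha : 0 < x ^ (3 / 4 : ℝ) := by positivity
  have hb : 0 < x ^ (1 / 16 : ℝ) := by positivity
  generalize x ^ (3 / 4 : ℝ) = a at *
  generalize x ^ (1 / 16 : ℝ) = b at *
  generalize Real.log x = l at *
  subst e1
  field_simp

/-- Aperiodic cross-correlation over the finite index set `S`. -/
def crossCorr {G : Type*} [AddCommGroup G] (S : Finset G) (A B : G → ℝ) (u : G) : ℝ :=
  ∑ x ∈ S, A x * B (x + u)

/-- Sum of the squared autocorrelations over displacements in `T`. -/
def corrEnergy {G : Type*} [AddCommGroup G] (S T : Finset G) (A : G → ℝ) : ℝ :=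
  ∑ u ∈ T, crossCorr S A A u ^ 2

theorem crossCorr_neg {n : ℤ} {a : ℤ → ℝ} (ha : IsSeq n a) (u : ℤ) :
    crossCorr (Finset.Ico 0 n) a a (-u) = crossCorr (Finset.Ico 0 n) a a u := by
  have h : ∀ v : ℤ, crossCorr (Finset.Ico 0 n) a a v = ∑ᶠ i, a i * a (i + v) := by
    intro v
    rw [crossCorr, finsum_eq_sum_of_support_subset]
    intro i hi
    have := ha i (left_ne_zero_of_mul hi)
    simpa using this
  rw [h, h, ← finsum_comp_equiv (Equiv.addRight u)]
  refine finsum_congr fun i => ?_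
  simp [mul_comm]

theorem sum_Ico_neg_eq (n : ℕ) (f : ℤ → ℝ) :
    ∑ u ∈ Finset.Ico (-n : ℤ) n, f u = ∑ u ∈ Finset.range n, (f u + f (-((n - u : ℕ) : ℤ))) := by
  have h : ∑ u ∈ Finset.Ico (-n : ℤ) n, f u = ∑ u ∈ Finset.range (n + n), f (u - n) := by
    refine Finset.sum_nbij' (fun i => (i + n).toNat) (fun u => (u : ℤ) - n) ?_ ?_ ?_ ?_ ?_
    · intro i hi; simp only [Finset.mem_Ico, Finset.mem_range] at *; omega
    · intro i hi; simp only [Finset.mem_Ico, Finset.mem_range] at *; omega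
    · intro i hi; simp only [Finset.mem_Ico] at *; omega
    · intro i hi; simp only [Finset.mem_range] at *; omega
    · intro i hi
      simp only [Finset.mem_Ico] at hi
      congr 1; omega
  rw [h, Finset.sum_range_add, ← Finset.sum_add_distrib]
  refine Finset.sum_congr rfl fun u hu => ?_
  have hu' := Finset.mem_range.mp hu
  rw [add_comm]
  congr 2
  · push_cast; ring
  · omega

theorem isSeq_seqRotate (n : ℤ) (s : ℝ) (a : ℤ → ℝ) : IsSeq n (seqRotate n s a) := by
  intro i hi
  by_contra h
  exact hi (if_neg h)

theorem seqRotate_ternary {p : ℕ} [Fact p.Prime] (s : ℝ) {i : ℤ} (hi : 0 ≤ i) (hip : i < p) :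
    seqRotate p s (ternaryLegendreSeq p) i = quadCharR ((i : ZMod p) + ((⌊(p : ℝ) * s⌋ : ℤ) : ZMod p)) := by
  have hp0 : (0 : ℤ) < p := by exact_mod_cast (Fact.out : p.Prime).pos
  rw [seqRotate, if_pos ⟨hi, hip⟩, ternaryLegendreSeq,
    if_pos ⟨Int.emod_nonneg _ hp0.ne', Int.emod_lt_of_pos _ hp0⟩,
    ← jacobiSym.legendreSym.to_jacobiSym, legendreSym, quadCharR]
  congr 2
  rw [Int.cast_natCast, ← Int.cast_add]
  exact ZMod.intCast_mod _ _

theorem crossCorr_seqRotate_ternary {p : ℕ} [Fact p.Prime] (s : ℝ) {u : ℕ} (hu : u ≤ p) :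
    crossCorr (Finset.Ico 0 (p : ℤ)) (seqRotate p s (ternaryLegendreSeq p))
      (seqRotate p s (ternaryLegendreSeq p)) u =
      winCorr quadCharR ((⌊(p : ℝ) * s⌋ : ℤ) : ZMod p) u := by
  rw [crossCorr, winCorr]
  symm
  refine Finset.sum_of_injOn (fun i : ℕ => (i : ℤ)) (fun _ _ _ _ h => by simpa using h) ?_ ?_ ?_
  · intro i hi
    simp only [Finset.coe_range, Set.mem_Iio] at hi
    simp only [Finset.coe_Ico, Set.mem_Ico]
    omega
  · intro i hi hn
    simp only [Finset.mem_Ico] at hi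
    have : ¬ (i + u < p) := by
      intro h
      apply hn
      refine ⟨i.toNat, ?_, ?_⟩
      · simp only [Finset.coe_range, Set.mem_Iio]; omega
      · simp only; omega
    have h0 : seqRotate p s (ternaryLegendreSeq p) (i + u) = 0 := if_neg fun h => this h.2
    rw [h0, mul_zero]
  · intro i hi
    have hi' := Finset.mem_range.mp hi
    rw [seqRotate_ternary s (by omega) (by omega), seqRotate_ternary s (by omega) (by omega)]
    push_cast
    rfl

theorem corrEnergy_seqRotate_ternary {p : ℕ} [Fact p.Prime] (s : ℝ) :
    corrEnergy (Finset.Ico 0 (p : ℤ)) (Finset.Ico (-p : ℤ) p) (seqRotate p s (ternaryLegendreSeq p)) =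
      winEnergy quadCharR ((⌊(p : ℝ) * s⌋ : ℤ) : ZMod p) := by
  rw [corrEnergy, sum_Ico_neg_eq, winEnergy]
  refine Finset.sum_congr rfl fun u hu => ?_
  have hu' := Finset.mem_range.mp hu
  rw [crossCorr_neg (isSeq_seqRotate _ _ _), crossCorr_seqRotate_ternary s hu'.le,
    crossCorr_seqRotate_ternary s (by omega)]

theorem tendsto_corrEnergy_ternary {s : ℝ} (hs1 : -(1/2) < s) (hs2 : s ≤ 1/2) {p : ℕ → ℕ}
    (hp : ∀ k, (p k).Prime ∧ Odd (p k)) (hlim : Filter.Tendsto p Filter.atTop Filter.atTop) :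
    Filter.Tendsto (fun k => corrEnergy (Finset.Ico 0 (p k : ℤ)) (Finset.Ico (-(p k) : ℤ) (p k))
      (seqRotate (p k) s (ternaryLegendreSeq (p k))) / (p k : ℝ) ^ 2)
      Filter.atTop (nhds (7/6 + 8 * (|s| - 1/4) ^ 2)) := by
  have hlim' : Filter.Tendsto (fun k => (p k : ℝ)) Filter.atTop Filter.atTop :=
    tendsto_natCast_atTop_atTop.comp hlim
  set M : ℕ → ℝ := fun k => 7 / 6 - 1 / (2 * (p k : ℝ)) - 2 / (3 * (p k : ℝ) ^ 2) +
    ((2 * ((-2 * ⌊(p k : ℝ) * s⌋ % (p k : ℤ) : ℤ) : ℝ) + 2 - p k) / p k) ^ 2 / 2 with hM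
  have h1 : Filter.Tendsto M Filter.atTop (nhds (7/6 + 8 * (|s| - 1/4) ^ 2)) := by
    have a1 : Filter.Tendsto (fun k => 1 / (2 * (p k : ℝ))) Filter.atTop (nhds 0) :=
      (hlim'.const_mul_atTop (by norm_num : (0 : ℝ) < 2)).const_div_atTop 1
    have a2 : Filter.Tendsto (fun k => 2 / (3 * (p k : ℝ) ^ 2)) Filter.atTop (nhds 0) :=
      (((Filter.tendsto_pow_atTop two_ne_zero).comp hlim').const_mul_atTop
        (by norm_num : (0 : ℝ) < 3)).const_div_atTop 2
    have a3 := (tendsto_rotation_term hs1 hs2 (fun k => (hp k).2) hlim).div_const 2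
    have a4 := ((a1.const_sub (7 / 6)).sub a2).add a3
    convert a4 using 2
    ring
  have h2 := tendsto_rpow_mul_log_div.comp hlim'
  refine (tendsto_iff_of_dist (squeeze_zero (fun _ => dist_nonneg) (fun k => ?_) h2)).mp h1
  have : Fact (p k).Prime := ⟨(hp k).1⟩
  have hp2 : p k ≠ 2 := by
    intro h
    have := (hp k).2
    rw [h] at this
    exact absurd this (by decide)
  have h3 := abs_winEnergy_quadChar_sub_le hp2 ((⌊(p k : ℝ) * s⌋ : ℤ) : ZMod (p k))
  have h4 : ((-2 * ((⌊(p k : ℝ) * s⌋ : ℤ) : ZMod (p k))).val : ℝ) =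
      ((-2 * ⌊(p k : ℝ) * s⌋ % (p k : ℤ) : ℤ) : ℝ) := by
    rw [← ZMod.val_intCast]
    push_cast
    rfl
  rw [h4] at h3
  rw [dist_comm, Real.dist_eq, corrEnergy_seqRotate_ternary]
  exact h3

section Perturbation

variable {G : Type*} [AddCommGroup G]

theorem sum_shift_eq {S T : Finset G} (hT : ∀ x ∈ S, ∀ y ∈ S, y - x ∈ T) {f : G → ℝ}
    (hf : ∀ x ∉ S, f x = 0) {x : G} (hx : x ∈ S) : ∑ u ∈ T, f (x + u) = ∑ z ∈ S, f z := by
  symm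
  refine Finset.sum_of_injOn (fun z => z - x) (fun a _ b _ h => by simpa using h) ?_ ?_ ?_
  · intro z hz
    exact hT x hx z hz
  · intro u _ hn
    refine hf _ fun h => hn ⟨x + u, h, ?_⟩
    simp
  · intro z _
    simp

theorem sum_crossCorr_sq {S T : Finset G} (hT : ∀ x ∈ S, ∀ y ∈ S, y - x ∈ T) {A D : G → ℝ}
    (hA : ∀ x ∉ S, A x = 0) (hD : ∀ x ∉ S, D x = 0) :
    ∑ u ∈ T, crossCorr S A D u ^ 2 = ∑ u ∈ T, crossCorr S A A u * crossCorr S D D u := by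
  calc ∑ u ∈ T, crossCorr S A D u ^ 2
      = ∑ x ∈ S, ∑ y ∈ S, A x * A y * ∑ u ∈ T, D (x + u) * D (x + u + (y - x)) := by
        simp only [crossCorr, sq, Finset.sum_mul_sum]
        rw [Finset.sum_comm]
        refine Finset.sum_congr rfl fun x _ => ?_
        rw [Finset.sum_comm]
        refine Finset.sum_congr rfl fun y _ => ?_
        rw [Finset.mul_sum]
        refine Finset.sum_congr rfl fun u _ => ?_
        rw [show x + u + (y - x) = y + u by abel]
        ring
    _ = ∑ x ∈ S, A x * ∑ y ∈ S, A y * crossCorr S D D (y - x) := by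
        refine Finset.sum_congr rfl fun x hx => ?_
        rw [Finset.mul_sum]
        refine Finset.sum_congr rfl fun y _ => ?_
        rw [sum_shift_eq (f := fun z => D z * D (z + (y - x))) hT
          (fun z hz => by simp only [hD z hz, zero_mul]) hx, crossCorr]
        ring
    _ = ∑ x ∈ S, A x * ∑ u ∈ T, A (x + u) * crossCorr S D D u := by
        refine Finset.sum_congr rfl fun x hx => ?_
        rw [← sum_shift_eq (f := fun y => A y * crossCorr S D D (y - x)) hT
          (fun z hz => by simp only [hA z hz, zero_mul]) hx]
        simp only [add_sub_cancel_left]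
    _ = _ := by
        simp only [Finset.mul_sum]
        rw [Finset.sum_comm]
        refine Finset.sum_congr rfl fun u _ => ?_
        rw [show crossCorr S A A u = ∑ x ∈ S, A x * A (x + u) from rfl, Finset.sum_mul]
        exact Finset.sum_congr rfl fun x _ => by ring

theorem sqrt_sum_add_sq_le {ι : Type*} (T : Finset ι) (f g : ι → ℝ) :
    √(∑ u ∈ T, (f u + g u) ^ 2) ≤ √(∑ u ∈ T, f u ^ 2) + √(∑ u ∈ T, g u ^ 2) := by
  apply Real.sqrt_le_iff.mpr
  refine ⟨by positivity, ?_⟩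
  have h := Real.sum_mul_le_sqrt_mul_sqrt T f g
  have hf : 0 ≤ ∑ u ∈ T, f u ^ 2 := Finset.sum_nonneg fun _ _ => sq_nonneg _
  have hg : 0 ≤ ∑ u ∈ T, g u ^ 2 := Finset.sum_nonneg fun _ _ => sq_nonneg _
  have e : ∑ u ∈ T, (f u + g u) ^ 2 = ∑ u ∈ T, f u ^ 2 + 2 * ∑ u ∈ T, f u * g u + ∑ u ∈ T, g u ^ 2 := by
    rw [Finset.mul_sum, ← Finset.sum_add_distrib, ← Finset.sum_add_distrib]
    exact Finset.sum_congr rfl fun u _ => by ring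
  rw [e, add_sq, Real.sq_sqrt hf, Real.sq_sqrt hg]
  linarith

theorem corrEnergy_nonneg (S T : Finset G) (A : G → ℝ) : 0 ≤ corrEnergy S T A :=
  Finset.sum_nonneg fun _ _ => sq_nonneg _

theorem sqrt_sum_crossCorr_sq_le {S T : Finset G} (hT : ∀ x ∈ S, ∀ y ∈ S, y - x ∈ T) {A D : G → ℝ}
    (hA : ∀ x ∉ S, A x = 0) (hD : ∀ x ∉ S, D x = 0) :
    √(∑ u ∈ T, crossCorr S A D u ^ 2) ≤ √√(corrEnergy S T A) * √√(corrEnergy S T D) := by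
  rw [sum_crossCorr_sq hT hA hD, ← Real.sqrt_mul (Real.sqrt_nonneg _)]
  exact Real.sqrt_le_sqrt (Real.sum_mul_le_sqrt_mul_sqrt T _ _)

theorem sqrt_sqrt_corrEnergy_add_le {S T : Finset G} (hT : ∀ x ∈ S, ∀ y ∈ S, y - x ∈ T)
    {A D : G → ℝ} (hA : ∀ x ∉ S, A x = 0) (hD : ∀ x ∉ S, D x = 0) :
    √√(corrEnergy S T (A + D)) ≤ √√(corrEnergy S T A) + √√(corrEnergy S T D) := by
  refine Real.sqrt_le_iff.mpr ⟨by positivity, ?_⟩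
  have e : corrEnergy S T (A + D) = ∑ u ∈ T, ((crossCorr S A A u + crossCorr S A D u) +
      (crossCorr S D A u + crossCorr S D D u)) ^ 2 := by
    refine Finset.sum_congr rfl fun u _ => ?_
    congr 1
    simp only [crossCorr, Pi.add_apply, ← Finset.sum_add_distrib]
    exact Finset.sum_congr rfl fun x _ => by ring
  have h1 := sqrt_sum_add_sq_le T (fun u => crossCorr S A A u + crossCorr S A D u)
    (fun u => crossCorr S D A u + crossCorr S D D u)
  have h2 := sqrt_sum_add_sq_le T (crossCorr S A A) (crossCorr S A D)
  have h3 := sqrt_sum_add_sq_le T (crossCorr S D A) (crossCorr S D D)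
  have h4 := sqrt_sum_crossCorr_sq_le hT hA hD
  have h5 := sqrt_sum_crossCorr_sq_le hT hD hA
  rw [e, add_sq, Real.sq_sqrt (Real.sqrt_nonneg _), Real.sq_sqrt (Real.sqrt_nonneg _)]
  simp only [corrEnergy] at *
  linarith

theorem corrEnergy_neg (S T : Finset G) (A : G → ℝ) : corrEnergy S T (-A) = corrEnergy S T A := by
  simp [corrEnergy, crossCorr]

theorem corrEnergy_le_card_pow {S T S' : Finset G} (hT : ∀ x ∈ S, ∀ y ∈ S, y - x ∈ T) (hS' : S' ⊆ S)
    {D : G → ℝ} (hD : ∀ x ∉ S', D x = 0) (hD1 : ∀ x, |D x| ≤ 1) :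
    corrEnergy S T D ≤ (S'.card : ℝ) ^ 3 := by
  have hsum : ∀ f : G → ℝ, ∑ x ∈ S, D x * f x = ∑ x ∈ S', D x * f x := fun f =>
    (Finset.sum_subset hS' fun x _ hx => by rw [hD x hx, zero_mul]).symm
  have h1 : ∀ u, |crossCorr S D D u| ≤ ∑ x ∈ S', |D (x + u)| := by
    intro u
    rw [crossCorr, hsum fun x => D (x + u)]
    refine (Finset.abs_sum_le_sum_abs _ _).trans (Finset.sum_le_sum fun x _ => ?_)
    rw [abs_mul]
    exact mul_le_of_le_one_left (abs_nonneg _) (hD1 x)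
  have h2 : ∀ u, |crossCorr S D D u| ≤ S'.card := by
    intro u
    refine (h1 u).trans ((Finset.sum_le_sum fun x _ => hD1 (x + u)).trans ?_)
    simp
  calc corrEnergy S T D = ∑ u ∈ T, |crossCorr S D D u| * |crossCorr S D D u| := by
        exact Finset.sum_congr rfl fun u _ => by rw [← sq_abs, sq]
    _ ≤ ∑ u ∈ T, (S'.card : ℝ) * ∑ x ∈ S', |D (x + u)| := by
        refine Finset.sum_le_sum fun u _ => ?_
        exact mul_le_mul (h2 u) (h1 u) (abs_nonneg _) (Nat.cast_nonneg _)
    _ = (S'.card : ℝ) * ∑ x ∈ S', ∑ u ∈ T, |D (x + u)| := by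
        rw [← Finset.mul_sum, Finset.sum_comm]
    _ ≤ (S'.card : ℝ) * ∑ x ∈ S', (S'.card : ℝ) := by
        gcongr with x hx
        rw [sum_shift_eq (f := fun z => |D z|) hT (fun z hz => by
          simp only [hD z fun h => hz (hS' h), abs_zero]) (hS' hx)]
        rw [← Finset.sum_subset hS' fun x _ hx => by rw [hD x hx, abs_zero]]
        refine (Finset.sum_le_sum fun x _ => hD1 x).trans ?_
        simp
    _ = _ := by simp; ring

theorem abs_sqrt_sqrt_corrEnergy_sub_le {S T : Finset G} (hT : ∀ x ∈ S, ∀ y ∈ S, y - x ∈ T)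
    {A D : G → ℝ} (hA : ∀ x ∉ S, A x = 0) (hD : ∀ x ∉ S, D x = 0) :
    |√√(corrEnergy S T (A + D)) - √√(corrEnergy S T A)| ≤ √√(corrEnergy S T D) := by
  have h1 := sqrt_sqrt_corrEnergy_add_le hT hA hD
  have h2 := sqrt_sqrt_corrEnergy_add_le (A := A + D) (D := -D) hT
    (fun x hx => by simp [hA x hx, hD x hx]) (fun x hx => by simp [hD x hx])
  rw [corrEnergy_neg, add_neg_cancel_right] at h2
  rw [abs_le]
  constructor <;> linarith

theorem corrEnergy_prod {H : Type*} [AddCommGroup H] (S T : Finset G) (S' T' : Finset H)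
    (a : G → ℝ) (b : H → ℝ) :
    corrEnergy (S ×ˢ S') (T ×ˢ T') (fun x => a x.1 * b x.2) = corrEnergy S T a * corrEnergy S' T' b := by
  rw [corrEnergy, corrEnergy, corrEnergy, Finset.sum_mul_sum, Finset.sum_product]
  refine Finset.sum_congr rfl fun u _ => Finset.sum_congr rfl fun v _ => ?_
  rw [← mul_pow, crossCorr, crossCorr, crossCorr, Finset.sum_mul_sum, Finset.sum_product]
  congr 1
  refine Finset.sum_congr rfl fun x _ => Finset.sum_congr rfl fun y _ => ?_
  simp only [Prod.fst_add, Prod.snd_add]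
  ring

end Perturbation

/-- The index set `[0, n) × [0, m)` of an array of size `n × m`. -/
def box (n m : ℕ) : Finset (ℤ × ℤ) := Finset.Ico 0 (n : ℤ) ×ˢ Finset.Ico 0 (m : ℤ)

/-- A set containing all differences of elements of `box n m`. -/
def diffBox (n m : ℕ) : Finset (ℤ × ℤ) := Finset.Ico (-n : ℤ) n ×ˢ Finset.Ico (-m : ℤ) m

theorem mem_box {n m : ℕ} {x : ℤ × ℤ} : x ∈ box n m ↔ 0 ≤ x.1 ∧ x.1 < n ∧ 0 ≤ x.2 ∧ x.2 < m := by
  simp only [box, Finset.mem_product, Finset.mem_Ico]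
  tauto

theorem sub_mem_diffBox {n m : ℕ} : ∀ x ∈ box n m, ∀ y ∈ box n m, y - x ∈ diffBox n m := by
  intro x hx y hy
  rw [mem_box] at hx hy
  simp only [diffBox, Finset.mem_product, Finset.mem_Ico, Prod.fst_sub, Prod.snd_sub]
  omega

theorem autocorr_eq_crossCorr {n m : ℕ} {A : ℤ × ℤ → ℝ} (hA : ∀ x ∉ box n m, A x = 0) (u : ℤ × ℤ) :
    autocorr A u.1 u.2 = crossCorr (box n m) A A u := by
  rw [autocorr, crossCorr, box, Finset.sum_product]
  have h0 : ∀ i j, ¬ (0 ≤ i ∧ i < (n : ℤ)) ∨ ¬ (0 ≤ j ∧ j < (m : ℤ)) → A (i, j) = 0 := by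
    intro i j h
    apply hA
    rw [mem_box]
    tauto
  have h1 : ∀ i, ∑ᶠ j, A (i, j) * A (i + u.1, j + u.2) =
      ∑ j ∈ Finset.Ico 0 (m : ℤ), A (i, j) * A (i + u.1, j + u.2) := by
    intro i
    refine finsum_eq_sum_of_support_subset _ fun j hj => ?_
    by_contra h
    refine left_ne_zero_of_mul hj (h0 i j (Or.inr ?_))
    simpa using h
  simp only [h1]
  refine finsum_eq_sum_of_support_subset _ fun i hi => ?_
  by_contra h
  refine hi (Finset.sum_eq_zero fun j _ => ?_)
  rw [h0 i j (Or.inl (by simpa using h)), zero_mul]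

theorem crossCorr_eq_zero {n m : ℕ} {A : ℤ × ℤ → ℝ} (hA : ∀ x ∉ box n m, A x = 0) {u : ℤ × ℤ}
    (hu : u ∉ diffBox n m) : crossCorr (box n m) A A u = 0 := by
  refine Finset.sum_eq_zero fun x hx => ?_
  rw [hA (x + u) fun h => hu ?_, mul_zero]
  simpa using sub_mem_diffBox x hx _ h

theorem one_div_meritFactor {n m : ℕ} (hn : n ≠ 0) (hm : m ≠ 0) {A : ℤ × ℤ → ℝ}
    (hA : IsBinaryArray n m A) :
    1 / meritFactor n m A =
      corrEnergy (box n m) (diffBox n m) A / ((n : ℝ) * m) ^ 2 - 1 := by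
  have hA0 : ∀ x ∉ box n m, A x = 0 := by
    rintro ⟨i, j⟩ hx
    by_contra h
    exact hx (mem_box.mpr (hA.1 i j h))
  have hn' : (n : ℝ) ≠ 0 := by exact_mod_cast hn
  have hm' : (m : ℝ) ≠ 0 := by exact_mod_cast hm
  have hsum : ∑ᶠ uv ∈ {x : ℤ × ℤ | x ≠ (0, 0)}, (autocorr A uv.1 uv.2) ^ 2 =
      ∑ u ∈ (diffBox n m).erase 0, crossCorr (box n m) A A u ^ 2 := by
    simp only [autocorr_eq_crossCorr hA0]
    refine finsum_mem_eq_sum_of_inter_support_eq _ ?_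
    ext u
    simp only [Set.mem_inter_iff, Set.mem_ofPred_eq, Function.mem_support, Finset.coe_erase,
      Set.mem_sdiff, Finset.mem_coe, Set.mem_singleton_iff]
    constructor
    · rintro ⟨h1, h2⟩
      refine ⟨⟨?_, h1⟩, h2⟩
      by_contra h
      exact h2 (by rw [crossCorr_eq_zero hA0 h]; norm_num)
    · rintro ⟨⟨_, h1⟩, h2⟩
      exact ⟨h1, h2⟩
  have h00 : (0 : ℤ × ℤ) ∈ diffBox n m := by
    simp only [diffBox, Finset.mem_product, Finset.mem_Ico, Prod.fst_zero, Prod.snd_zero]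
    omega
  have h0 : crossCorr (box n m) A A 0 = (n : ℝ) * m := by
    have : ∀ x ∈ box n m, A x * A (x + 0) = 1 := by
      rintro ⟨i, j⟩ hx
      obtain ⟨h1, h2, h3, h4⟩ := mem_box.mp hx
      rcases hA.2 i j h1 h2 h3 h4 with h | h <;> rw [add_zero, h] <;> norm_num
    rw [crossCorr, Finset.sum_congr rfl this]
    simp [box]
  have h1 := Finset.add_sum_erase (diffBox n m) (fun u => crossCorr (box n m) A A u ^ 2) h00
  simp only [h0] at h1
  rw [meritFactor, hsum, one_div_div, corrEnergy, ← h1]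
  push_cast
  field_simp
  ring

theorem isBinaryArray_arrRotate {p q : ℕ} (hp : 0 < p) (hq : 0 < q) (s t : ℝ) {X : ℤ × ℤ → ℝ}
    (hX : IsBinaryArray p q X) : IsBinaryArray p q (arrRotate p q s t X) := by
  have hp' : (0 : ℤ) < p := by exact_mod_cast hp
  have hq' : (0 : ℤ) < q := by exact_mod_cast hq
  constructor
  · intro i j h
    by_contra hn
    exact h (if_neg hn)
  · intro i j h1 h2 h3 h4
    rw [arrRotate, if_pos ⟨h1, h2, h3, h4⟩]
    exact hX.2 _ _ (Int.emod_nonneg _ hp'.ne') (Int.emod_lt_of_pos _ hp')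
      (Int.emod_nonneg _ hq'.ne') (Int.emod_lt_of_pos _ hq')

theorem eq_neg_emod_of_add_emod_eq_zero {n i r : ℤ} (h0 : 0 ≤ i) (hn : i < n) (h : (i + r) % n = 0) :
    i = -r % n := by
  have h1 : i ≡ -r [ZMOD n] := by
    have h2 : i + r ≡ 0 [ZMOD n] := by rw [Int.ModEq, h, Int.zero_emod]
    simpa using h2.add_right (-r)
  rw [← h1, Int.emod_eq_of_lt h0 hn]

theorem arrRotate_eq_zero {n m : ℕ} (s t : ℝ) (X : ℤ × ℤ → ℝ) {x : ℤ × ℤ} (hx : x ∉ box n m) :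
    arrRotate n m s t X x = 0 :=
  if_neg fun h => hx (mem_box.mpr h)

theorem abs_arrRotate_le_one {p q : ℕ} (hp : 0 < p) (hq : 0 < q) (s t : ℝ) {X : ℤ × ℤ → ℝ}
    (hX : IsBinaryArray p q X) (x : ℤ × ℤ) : |arrRotate p q s t X x| ≤ 1 := by
  by_cases hx : x ∈ box p q
  · obtain ⟨h1, h2, h3, h4⟩ := mem_box.mp hx
    rcases (isBinaryArray_arrRotate hp hq s t hX).2 x.1 x.2 h1 h2 h3 h4 with h | h <;>
      simp [h]
  · simp [arrRotate_eq_zero s t X hx]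

theorem abs_sub_sqrt_sqrt_le_of_legendre {p q : ℕ} (hp : 1 < p) (hq : 1 < q) (s t : ℝ) {X : ℤ × ℤ → ℝ}
    (hX : IsLegendreArray p q X) :
    |√√(corrEnergy (box p q) (diffBox p q) (arrRotate p q s t X)) -
      √√(corrEnergy (box p q) (diffBox p q) (fun x => seqRotate p s (ternaryLegendreSeq p) x.1 *
        seqRotate q t (ternaryLegendreSeq q) x.2))| ≤ √√((q : ℝ) ^ 3) + √√((p : ℝ) ^ 3) := by
  have hp' : (0 : ℤ) < p := by omega
  have hq' : (0 : ℤ) < q := by omega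
  set B := arrRotate p q s t X with hB
  set Y : ℤ × ℤ → ℝ := fun x => seqRotate p s (ternaryLegendreSeq p) x.1 *
        seqRotate q t (ternaryLegendreSeq q) x.2 with hY
  set R : ℤ × ℤ → ℝ := fun x => if (x.1 + ⌊(p : ℝ) * s⌋) % (p : ℤ) = 0 then B x else 0 with hR
  set K : ℤ × ℤ → ℝ := fun x => if (x.1 + ⌊(p : ℝ) * s⌋) % (p : ℤ) ≠ 0 ∧
    (x.2 + ⌊(q : ℝ) * t⌋) % (q : ℤ) = 0 then B x else 0 with hK
  have hB0 : ∀ x ∉ box p q, B x = 0 := fun x hx => arrRotate_eq_zero s t X hx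
  have hB1 : ∀ x, |B x| ≤ 1 := abs_arrRotate_le_one (by omega) (by omega) s t hX.1
  have hY0 : ∀ x ∉ box p q, Y x = 0 := by
    intro x hx
    by_contra h
    have h1 := isSeq_seqRotate _ _ _ _ (left_ne_zero_of_mul h)
    have h2 := isSeq_seqRotate _ _ _ _ (right_ne_zero_of_mul h)
    exact hx (mem_box.mpr ⟨h1.1, h1.2, h2.1, h2.2⟩)
  have hR0 : ∀ x ∉ box p q, R x = 0 := fun x hx => by simp only [hR, hB0 x hx, ite_self]
  have hK0 : ∀ x ∉ box p q, K x = 0 := fun x hx => by simp only [hK, hB0 x hx, ite_self]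
  have hsum : B = (Y + R) + K := by
    ext x
    by_cases hx : x ∈ box p q
    swap
    · simp only [Pi.add_apply, hB0 x hx, hY0 x hx, hR0 x hx, hK0 x hx, add_zero]
    obtain ⟨h1, h2, h3, h4⟩ := mem_box.mp hx
    have ha1 := Int.emod_nonneg (x.1 + ⌊(p : ℝ) * s⌋) hp'.ne'
    have ha2 := Int.emod_lt_of_pos (x.1 + ⌊(p : ℝ) * s⌋) hp'
    have hb1 := Int.emod_nonneg (x.2 + ⌊(q : ℝ) * t⌋) hq'.ne'
    have hb2 := Int.emod_lt_of_pos (x.2 + ⌊(q : ℝ) * t⌋) hq'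
    have hYx : Y x = (jacobiSym ((x.1 + ⌊(p : ℝ) * s⌋) % (p : ℤ)) p : ℝ) *
        (jacobiSym ((x.2 + ⌊(q : ℝ) * t⌋) % (q : ℤ)) q : ℝ) := by
      simp only [hY, seqRotate, ternaryLegendreSeq, Int.cast_natCast]
      rw [if_pos ⟨h1, h2⟩, if_pos ⟨ha1, ha2⟩, if_pos ⟨h3, h4⟩, if_pos ⟨hb1, hb2⟩]
    have hBx : B x = X ((x.1 + ⌊(p : ℝ) * s⌋) % (p : ℤ), (x.2 + ⌊(q : ℝ) * t⌋) % (q : ℤ)) := by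
      simp only [hB, arrRotate, Int.cast_natCast]
      rw [if_pos ⟨h1, h2, h3, h4⟩]
    simp only [Pi.add_apply, hR, hK]
    by_cases ha : (x.1 + ⌊(p : ℝ) * s⌋) % (p : ℤ) = 0
    · rw [hYx, if_pos ha, if_neg (fun h => h.1 ha), ha, jacobiSym.zero_left hp]
      simp
    · by_cases hb : (x.2 + ⌊(q : ℝ) * t⌋) % (q : ℤ) = 0
      · rw [hYx, if_neg ha, if_pos ⟨ha, hb⟩, hb, jacobiSym.zero_left hq]
        simp
      · rw [hYx, if_neg ha, if_neg (fun h => hb h.2), hBx,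
          hX.2 _ _ (by omega) ha2 (by omega) hb2]
        simp
  have hRE : corrEnergy (box p q) (diffBox p q) R ≤ (q : ℝ) ^ 3 := by
    have h := corrEnergy_le_card_pow (S' := {-⌊(p : ℝ) * s⌋ % (p : ℤ)} ×ˢ Finset.Ico 0 (q : ℤ))
      (D := R) (sub_mem_diffBox (n := p) (m := q)) ?_ ?_ ?_
    · simpa using h
    · intro x hx
      simp only [Finset.mem_product, Finset.mem_singleton, Finset.mem_Ico] at hx
      rw [mem_box, hx.1]
      exact ⟨Int.emod_nonneg _ hp'.ne', Int.emod_lt_of_pos _ hp', hx.2.1, hx.2.2⟩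
    · intro x hx
      by_contra h
      simp only [hR, ite_eq_right_iff, Classical.not_imp] at h
      obtain ⟨h1, h2, h3, h4⟩ := mem_box.mp (by_contra fun hn => h.2 (hB0 x hn))
      refine hx ?_
      simp only [Finset.mem_product, Finset.mem_singleton, Finset.mem_Ico]
      exact ⟨eq_neg_emod_of_add_emod_eq_zero h1 h2 h.1, h3, h4⟩
    · intro x
      simp only [hR]
      split_ifs
      · exact hB1 x
      · simp
  have hKE : corrEnergy (box p q) (diffBox p q) K ≤ (p : ℝ) ^ 3 := by
    have h := corrEnergy_le_card_pow (S' := Finset.Ico 0 (p : ℤ) ×ˢ {-⌊(q : ℝ) * t⌋ % (q : ℤ)})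
      (D := K) (sub_mem_diffBox (n := p) (m := q)) ?_ ?_ ?_
    · simpa using h
    · intro x hx
      simp only [Finset.mem_product, Finset.mem_singleton, Finset.mem_Ico] at hx
      rw [mem_box, hx.2]
      exact ⟨hx.1.1, hx.1.2, Int.emod_nonneg _ hq'.ne', Int.emod_lt_of_pos _ hq'⟩
    · intro x hx
      by_contra h
      simp only [hK, ite_eq_right_iff, Classical.not_imp] at h
      obtain ⟨h1, h2, h3, h4⟩ := mem_box.mp (by_contra fun hn => h.2 (hB0 x hn))
      refine hx ?_
      simp only [Finset.mem_product, Finset.mem_singleton, Finset.mem_Ico]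
      exact ⟨⟨h1, h2⟩, eq_neg_emod_of_add_emod_eq_zero h3 h4 h.1.2⟩
    · intro x
      simp only [hK]
      split_ifs
      · exact hB1 x
      · simp
  have h1 := abs_sqrt_sqrt_corrEnergy_sub_le (sub_mem_diffBox (n := p) (m := q)) hY0 hR0
  have h2 := abs_sqrt_sqrt_corrEnergy_sub_le (A := Y + R) (D := K)
    (sub_mem_diffBox (n := p) (m := q))
    (fun x hx => by simp only [Pi.add_apply, hY0 x hx, hR0 x hx, add_zero]) hK0
  rw [← hsum] at h2
  refine (abs_sub_le _ (√√(corrEnergy (box p q) (diffBox p q) (Y + R))) _).trans ?_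
  rw [add_comm]
  exact add_le_add (h1.trans (Real.sqrt_le_sqrt (Real.sqrt_le_sqrt hRE)))
    (h2.trans (Real.sqrt_le_sqrt (Real.sqrt_le_sqrt hKE)))

theorem tendsto_atTop_of_div_sq_tendsto_zero {p q : ℕ → ℕ} (hq : ∀ k, 0 < q k) (hp : ∀ k, 0 < p k)
    (h : Filter.Tendsto (fun k => (q k : ℝ) / (p k : ℝ) ^ 2) Filter.atTop (nhds 0)) :
    Filter.Tendsto p Filter.atTop Filter.atTop := by
  refine Filter.tendsto_atTop.mpr fun N => ?_
  have hN : (0 : ℝ) < 1 / ((N : ℝ) + 1) ^ 2 := by positivity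
  filter_upwards [h.eventually_lt_const hN] with k hk
  by_contra hlt
  push Not at hlt
  have h1 : (p k : ℝ) ≤ N + 1 := by
    have : (p k : ℝ) < N := by exact_mod_cast hlt
    linarith
  have h2 : (0 : ℝ) < p k := by exact_mod_cast hp k
  have h3 : (1 : ℝ) ≤ q k := by exact_mod_cast hq k
  have h4 : 1 / ((N : ℝ) + 1) ^ 2 ≤ (q k : ℝ) / (p k : ℝ) ^ 2 := by gcongr
  linarith

/-- The asymptotic merit factor of rotated Legendre arrays of size `p_k × q_k`
with `q_k/p_k² → 0` and `p_k/q_k² → 0`. -/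
theorem stmt9 (s t : ℝ) (hs1 : -(1/2) < s) (hs2 : s ≤ 1/2)
    (ht1 : -(1/2) < t) (ht2 : t ≤ 1/2)
    (p q : ℕ → ℕ) (hp : ∀ k, (p k).Prime ∧ Odd (p k)) (hq : ∀ k, (q k).Prime ∧ Odd (q k))
    (hqp : Filter.Tendsto (fun k => (q k : ℝ) / (p k : ℝ) ^ 2) Filter.atTop (nhds 0))
    (hpq : Filter.Tendsto (fun k => (p k : ℝ) / (q k : ℝ) ^ 2) Filter.atTop (nhds 0))
    (X : ℕ → ℤ × ℤ → ℝ) (hX : ∀ k, IsLegendreArray (p k) (q k) (X k)) :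
    Filter.Tendsto
      (fun k : ℕ => 1 / meritFactor (p k) (q k) (arrRotate (p k) (q k) s t (X k)))
      Filter.atTop
      (nhds ((7/6 + 8 * (|s| - 1/4) ^ 2) * (7/6 + 8 * (|t| - 1/4) ^ 2) - 1)) := by
  have hp0 : ∀ k, 0 < p k := fun k => (hp k).1.pos
  have hq0 : ∀ k, 0 < q k := fun k => (hq k).1.pos
  have hE : ∀ k, 1 / meritFactor (p k) (q k) (arrRotate (p k) (q k) s t (X k)) =
      corrEnergy (box (p k) (q k)) (diffBox (p k) (q k)) (arrRotate (p k) (q k) s t (X k)) /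
        ((p k : ℝ) * q k) ^ 2 - 1 := fun k =>
    one_div_meritFactor (hp0 k).ne' (hq0 k).ne' (isBinaryArray_arrRotate (hp0 k) (hq0 k) s t (hX k).1)
  simp only [hE]
  refine Filter.Tendsto.sub_const ?_ 1
  set L : ℝ := (7/6 + 8 * (|s| - 1/4) ^ 2) * (7/6 + 8 * (|t| - 1/4) ^ 2) with hL
  set EB : ℕ → ℝ := fun k =>
    corrEnergy (box (p k) (q k)) (diffBox (p k) (q k)) (arrRotate (p k) (q k) s t (X k)) with hEB
  set EY : ℕ → ℝ := fun k => corrEnergy (box (p k) (q k)) (diffBox (p k) (q k))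
    (fun x => seqRotate (p k) s (ternaryLegendreSeq (p k)) x.1 *
      seqRotate (q k) t (ternaryLegendreSeq (q k)) x.2) with hEY
  have hY : Filter.Tendsto (fun k => EY k / ((p k : ℝ) * q k) ^ 2) Filter.atTop (nhds L) := by
    have h1 := (tendsto_corrEnergy_ternary hs1 hs2 hp
      (tendsto_atTop_of_div_sq_tendsto_zero hq0 hp0 hqp)).mul
      (tendsto_corrEnergy_ternary ht1 ht2 hq (tendsto_atTop_of_div_sq_tendsto_zero hp0 hq0 hpq))
    refine h1.congr fun k => ?_
    rw [hEY]
    simp only [box, diffBox, corrEnergy_prod]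
    rw [div_mul_div_comm, mul_pow]
  have hY' : Filter.Tendsto (fun k => √√(EY k / ((p k : ℝ) * q k) ^ 2)) Filter.atTop (nhds √√L) :=
    hY.sqrt.sqrt
  have hR : Filter.Tendsto (fun k => √√((q k : ℝ) / (p k : ℝ) ^ 2) + √√((p k : ℝ) / (q k : ℝ) ^ 2))
      Filter.atTop (nhds 0) := by
    simpa using hqp.sqrt.sqrt.add hpq.sqrt.sqrt
  have hB' : Filter.Tendsto (fun k => √√(EB k / ((p k : ℝ) * q k) ^ 2)) Filter.atTop (nhds √√L) := by
    refine (tendsto_iff_of_dist (squeeze_zero (fun _ => dist_nonneg) (fun k => ?_) hR)).mp hY'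
    have hpk : (0 : ℝ) < p k := by exact_mod_cast hp0 k
    have hqk : (0 : ℝ) < q k := by exact_mod_cast hq0 k
    have hN : 0 < √√(((p k : ℝ) * q k) ^ 2) := by positivity
    have e : ∀ {x : ℝ}, 0 ≤ x → √√(x / ((p k : ℝ) * q k) ^ 2) = √√x / √√(((p k : ℝ) * q k) ^ 2) := by
      intro x hx
      rw [Real.sqrt_div hx, Real.sqrt_div (Real.sqrt_nonneg _)]
    have e1 : (q k : ℝ) / (p k : ℝ) ^ 2 = (q k : ℝ) ^ 3 / ((p k : ℝ) * q k) ^ 2 := by field_simp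
    have e2 : (p k : ℝ) / (q k : ℝ) ^ 2 = (p k : ℝ) ^ 3 / ((p k : ℝ) * q k) ^ 2 := by field_simp
    rw [dist_comm, Real.dist_eq, e1, e2, e (corrEnergy_nonneg _ _ _), e (corrEnergy_nonneg _ _ _),
      e (by positivity), e (by positivity), ← sub_div, ← add_div, abs_div, abs_of_pos hN]
    exact div_le_div_of_nonneg_right
      (abs_sub_sqrt_sqrt_le_of_legendre (hp k).1.one_lt (hq k).1.one_lt s t (hX k)) hN.le
  have h4 : ∀ x : ℝ, 0 ≤ x → √√x ^ 4 = x := by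
    intro x hx
    rw [show √√x ^ 4 = (√√x ^ 2) ^ 2 by ring, Real.sq_sqrt (Real.sqrt_nonneg _), Real.sq_sqrt hx]
  have h5 := hB'.pow 4
  rw [h4 L (by positivity)] at h5
  exact h5.congr fun k => h4 _ (div_nonneg (corrEnergy_nonneg _ _ _) (by positivity))
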